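/- Let D ⊂ ℂ^n (n ≥ 2) be a bounded open convex set with real-analytic strictly convex boundary, and let f be a function on ∂D that is the restriction of a function real-analytic on a neighborhood of ∂D. If f extends holomorphically along every stationary disc of D, then f extends holomorphically to D: there exists F continuous on the closure of D, holomorphic on D, with F = f on ∂D. -/

import Mathlib

/-! The proof has two halves: small stationary discs give the tangential Cauchy–Riemann equations
for `f` on `∂D`, and an argument in the style of Hartogs and Bochner then extends `f` to `D`.

*Stationary discs.* Let `p ∈ ∂D` and let `v` be a complex tangential vector at `p`. Near `p`, in a
basis orthonormal for the Levi form, `∂D` looks like a ball, whose small stationary discs close to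
`p` in the direction `v` are `ζ ↦ p + s ζ v + O(s²)`, with nearly constant weight. These persist for
`∂D` itself. The unknowns (the boundary values of the disc and of the weight) live in the Wiener
algebra of absolutely convergent Fourier series, on which a real-analytic function acts by
superposition (`exists_superposition`), and holomorphic extension means that the negative
frequencies vanish. The equations, namely `ρ ∘ A = 0` and the vanishing of the negative frequencies
of the lift `ζ · (weight) · ∂ρ(A(ζ))`, have an invertible linearization at the constant disc,
because the real Hessian, hence the Levi form, is positive definite; the implicit function theorem
gives `exists_small_discs`. A holomorphic extension of `f` along `A` forces `∮ f(A(ζ)) dζ = 0`, and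
the first-order term of this identity as `s → 0` is `∂̄f_p(v) = 0` (`dbar_eq_zero_of_discs`,
`dbar_eq_zero_of_stationary`).

*Extension.* Since `∂̄f` is a multiple of `∂̄ρ` on `∂D`, subtracting suitable multiples of `ρ` and
`ρ²` from `f` gives an extension `f₁` of `f|_∂D` with `∂̄f₁` vanishing to second order on `∂D`
(`exists_flat`). Hence `∂̄f₁`, replaced by zero off `D`, is a `∂̄`-closed form `ω` of class `C¹`
with compact support (`exists_extension`). Its Cauchy transform along a fixed complex direction
solves `∂̄u = ω` (`cauchyT_dbar`, `exists_dbar_solution`). For `p ∈ ∂D` take a complex supporting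
hyperplane at `p`. As `n ≥ 2`, it contains a complex line through `p`, along which `u` is
holomorphic. If the hyperplane is parallel to the chosen direction, then `u(p) = 0` directly;
otherwise `u` vanishes far out on this line, and the maximum principle gives `u(p) = 0`. Then `F =
f₁ - u` is the required extension. -/

open Complex Metric Set

/-- The Wirtinger derivative `∂ρ/∂z_j` of a real-valued function `ρ` on `ℂⁿ`,
expressed via the real Fréchet derivative:
`∂ρ/∂z_j = (1/2)(∂ρ/∂x_j - i ∂ρ/∂y_j)`. -/
noncomputable def wirtinger {n : ℕ} (ρ : EuclideanSpace ℂ (Fin n) → ℝ)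
    (z : EuclideanSpace ℂ (Fin n)) (j : Fin n) : ℂ :=
  (1 / 2 : ℂ) *
    ((fderiv ℝ ρ z (EuclideanSpace.single j 1) : ℂ) -
      Complex.I * (fderiv ℝ ρ z (EuclideanSpace.single j Complex.I) : ℂ))

/-- `A : Δ̄ → D̄` is a stationary disc of the domain `D` with defining function `ρ`:
`A` is continuous on the closed unit disc, holomorphic on the open disc, nonconstant,
maps the closed disc into `D̄` and the unit circle into `∂D`, and there is a positive
continuous weight `p` on the circle such that
`ζ ↦ ζ · p(ζ) · ∂ρ(A(ζ))` extends continuously to `Δ̄`, holomorphically to `Δ`. -/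
def IsStationaryDisc {n : ℕ} (ρ : EuclideanSpace ℂ (Fin n) → ℝ)
    (D : Set (EuclideanSpace ℂ (Fin n))) (A : ℂ → EuclideanSpace ℂ (Fin n)) : Prop :=
  ContinuousOn A (closedBall 0 1) ∧
  DifferentiableOn ℂ A (ball 0 1) ∧
  (¬ ∃ c, ∀ ζ ∈ closedBall (0 : ℂ) 1, A ζ = c) ∧
  (∀ ζ ∈ closedBall (0 : ℂ) 1, A ζ ∈ closure D) ∧
  (∀ ζ ∈ sphere (0 : ℂ) 1, A ζ ∈ frontier D) ∧
  ∃ p : ℂ → ℝ, ContinuousOn p (sphere 0 1) ∧ (∀ ζ ∈ sphere (0 : ℂ) 1, 0 < p ζ) ∧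
    ∃ G : ℂ → EuclideanSpace ℂ (Fin n),
      ContinuousOn G (closedBall 0 1) ∧ DifferentiableOn ℂ G (ball 0 1) ∧
      ∀ ζ ∈ sphere (0 : ℂ) 1, ∀ j, G ζ j = ζ * (p ζ : ℂ) * wirtinger ρ (A ζ) j

/-- A function `f` defined near `∂D` extends holomorphically along the disc `A`. -/
def ExtendsAlong {n : ℕ} (f : EuclideanSpace ℂ (Fin n) → ℂ)
    (A : ℂ → EuclideanSpace ℂ (Fin n)) : Prop :=
  ∃ g : ℂ → ℂ, ContinuousOn g (closedBall 0 1) ∧ DifferentiableOn ℂ g (ball 0 1) ∧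
    ∀ ζ ∈ sphere (0 : ℂ) 1, g ζ = f (A ζ)

section

open Topology

/-! ### The Wiener algebra of absolutely convergent Fourier series -/

/-- The space `ℓ¹(ℤ)` of absolutely summable Fourier coefficients. -/
abbrev EllOne : Type := lp (fun _ : ℤ => ℂ) 1

namespace EllOne

lemma summable_norm (a : EllOne) : Summable fun k => ‖a k‖ := by
  have := (lp.memℓp a).summable (by simp)
  simpa using this

lemma norm_eq (a : EllOne) : ‖a‖ = ∑' k, ‖a k‖ := by
  have := lp.norm_eq_tsum_rpow (p := 1) (by simp) a
  simpa using this

variable {Y : Type*} [NormedAddCommGroup Y] [NormedSpace ℂ Y] [CompleteSpace Y]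

lemma summable_smul (x : ℤ → Y) (hx : ∀ k, ‖x k‖ ≤ 1) (a : EllOne) :
    Summable fun k => a k • x k := by
  refine Summable.of_norm_bounded (summable_norm a) fun k => ?_
  rw [norm_smul]
  exact mul_le_of_le_one_right (norm_nonneg _) (hx k)

/-- The universal property of `ℓ¹(ℤ)`: a family in the unit ball of a Banach space extends to
a contraction `a ↦ ∑ aₖ xₖ`. -/
noncomputable def lift (x : ℤ → Y) (hx : ∀ k, ‖x k‖ ≤ 1) : EllOne →L[ℂ] Y :=
  LinearMap.mkContinuous
    { toFun := fun a => ∑' k, a k • x k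
      map_add' := fun a b => by
        rw [← (summable_smul x hx a).tsum_add (summable_smul x hx b)]
        simp [add_smul]
      map_smul' := fun c a => by
        rw [RingHom.id_apply, ← (summable_smul x hx a).tsum_const_smul c]
        simp [mul_smul] } 1 (fun a => by
      rw [one_mul, norm_eq]
      refine tsum_of_norm_bounded (summable_norm a).hasSum fun k => ?_
      rw [norm_smul]
      exact mul_le_of_le_one_right (norm_nonneg _) (hx k))

lemma lift_apply (x : ℤ → Y) (hx : ∀ k, ‖x k‖ ≤ 1) (a : EllOne) :
    lift x hx a = ∑' k, a k • x k := rfl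

lemma norm_lift_le (x : ℤ → Y) (hx : ∀ k, ‖x k‖ ≤ 1) : ‖lift x hx‖ ≤ 1 :=
  LinearMap.mkContinuous_norm_le _ zero_le_one _

/-- The `k`-th basis vector of `ℓ¹(ℤ)`. -/
noncomputable def δ (k : ℤ) : EllOne := lp.single 1 k (1 : ℂ)

lemma norm_δ (k : ℤ) : ‖δ k‖ ≤ 1 := by
  rw [δ, lp.norm_single (by simp)]; simp

lemma δ_apply (k j : ℤ) : δ k j = if j = k then 1 else 0 := by
  rw [δ, lp.single_apply, Pi.single_apply]

@[simp] lemma lift_δ (x : ℤ → Y) (hx : ∀ k, ‖x k‖ ≤ 1) (k : ℤ) : lift x hx (δ k) = x k := by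
  rw [lift_apply, tsum_eq_single k]
  · simp [δ_apply]
  · intro j hj
    simp [δ_apply, hj]

lemma ext_δ {Z : Type*} [NormedAddCommGroup Z] [NormedSpace ℂ Z] {f g : EllOne →L[ℂ] Z}
    (h : ∀ k, f (δ k) = g (δ k)) : f = g := by
  refine lp.ext_continuousLinearMap (by simp) fun k => ?_
  ext
  exact h k

/-- Translation of coefficients by `k`. -/
noncomputable def shift (k : ℤ) : EllOne →L[ℂ] EllOne := lift (fun j => δ (k + j)) fun _ => norm_δ _

lemma norm_shift_le (k : ℤ) : ‖shift k‖ ≤ 1 := norm_lift_le _ _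

/-- Convolution as a continuous bilinear map. -/
noncomputable def conv : EllOne →L[ℂ] EllOne →L[ℂ] EllOne :=
  lift shift norm_shift_le

@[simp] lemma conv_δ_δ (j k : ℤ) : conv (δ j) (δ k) = δ (j + k) := by
  rw [conv, lift_δ, shift, lift_δ]

lemma conv_comm (a b : EllOne) : conv a b = conv b a := by
  have : conv = conv.flip := by
    refine ext_δ fun j => ext_δ fun k => ?_
    simp [add_comm]
  exact congrArg (fun f => f a b) this

lemma conv_assoc (a b c : EllOne) : conv (conv a b) c = conv a (conv b c) := by
  have : ∀ j k, (conv.flip (δ k)).comp (conv.flip (δ j)) = conv.flip (conv (δ j) (δ k)) := by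
    intro j k
    refine ext_δ fun i => ?_
    simp [add_assoc]
  have h1 : ∀ j, conv (conv a (δ j)) = (conv a).comp (conv (δ j)) := by
    intro j
    refine ext_δ fun k => ?_
    exact congrArg (fun f => f a) (this j k)
  have h2 : (conv.flip c).comp (conv a) = (conv a).comp (conv.flip c) := by
    refine ext_δ fun j => ?_
    exact congrArg (fun f => f c) (h1 j)
  exact congrArg (fun f => f b) h2

lemma conv_one (a : EllOne) : conv (δ 0) a = a := by
  have : conv (δ 0) = ContinuousLinearMap.id ℂ EllOne := ext_δ fun k => by simp
  exact congrArg (fun f => f a) this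

lemma norm_conv_le (a b : EllOne) : ‖conv a b‖ ≤ ‖a‖ * ‖b‖ := by
  refine (conv.le_opNorm₂ a b).trans ?_
  have : ‖conv‖ ≤ 1 := norm_lift_le _ _
  have h := mul_nonneg (norm_nonneg a) (norm_nonneg b)
  calc ‖conv‖ * ‖a‖ * ‖b‖ = ‖conv‖ * (‖a‖ * ‖b‖) := by ring
    _ ≤ _ := mul_le_of_le_one_left h this

end EllOne

/-- The Wiener algebra of absolutely convergent Fourier series on the unit circle, realised as
`ℓ¹(ℤ)` with convolution. -/
def Wiener : Type := EllOne

namespace Wiener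
open EllOne

noncomputable instance : NormedAddCommGroup Wiener := inferInstanceAs (NormedAddCommGroup EllOne)

noncomputable instance : CommRing Wiener :=
  { (inferInstance : AddCommGroup Wiener) with
    mul := fun a b => conv a b
    one := δ 0
    left_distrib := fun a b c => (conv a).map_add b c
    right_distrib := fun a b c => (congrArg (fun f => f c) (conv.map_add a b) :)
    zero_mul := fun a => (congrArg (fun f => f a) conv.map_zero :)
    mul_zero := fun a => (conv a).map_zero
    mul_assoc := conv_assoc
    one_mul := conv_one
    mul_one := fun a => (conv_comm _ _).trans (conv_one a)
    mul_comm := conv_comm }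

noncomputable instance : NormedCommRing Wiener :=
  { (inferInstance : NormedAddCommGroup Wiener), (inferInstance : CommRing Wiener) with
    norm_mul_le := norm_conv_le }

noncomputable instance : Module ℂ Wiener := inferInstanceAs (Module ℂ EllOne)

noncomputable instance : Algebra ℂ Wiener :=
  Algebra.ofModule
    (fun r x y => (congrArg (fun f => f y) (conv.map_smul r x) :))
    (fun r x y => (conv x).map_smul r y)

noncomputable instance : NormedAlgebra ℂ Wiener :=
  { (inferInstance : Algebra ℂ Wiener) with
    norm_smul_le := fun c x => @norm_smul_le ℂ EllOne _ _ _ _ c x }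

noncomputable instance : CompleteSpace Wiener := inferInstanceAs (CompleteSpace EllOne)

/-- The coefficient sequence of an element of the Wiener algebra. -/
def toEll (a : Wiener) : EllOne := a

/-- The universal property `EllOne.lift`, stated for the Wiener algebra. -/
noncomputable def lift {Y : Type*} [NormedAddCommGroup Y] [NormedSpace ℂ Y] [CompleteSpace Y]
    (x : ℤ → Y) (hx : ∀ k, ‖x k‖ ≤ 1) : Wiener →L[ℂ] Y :=
  { toFun := EllOne.lift x hx
    map_add' := (EllOne.lift x hx).map_add
    map_smul' := (EllOne.lift x hx).map_smul
    cont := (EllOne.lift x hx).cont }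

/-- The monomial `ζᵏ`. -/
noncomputable def mono (k : ℤ) : Wiener := δ k

/-- The `k`-th Fourier coefficient. -/
noncomputable def coef (k : ℤ) : Wiener →L[ℂ] ℂ :=
  { toFun := fun a => toEll a k
    map_add' := fun _ _ => rfl
    map_smul' := fun _ _ => rfl
    cont := (lp.evalCLM ℂ (fun _ : ℤ => ℂ) 1 k).cont }

lemma norm_eq (a : Wiener) : ‖a‖ = ∑' k, ‖coef k a‖ := EllOne.norm_eq a

lemma summable_coef (a : Wiener) : Summable fun k => ‖coef k a‖ := EllOne.summable_norm a

lemma norm_coef_le (a : Wiener) (k : ℤ) : ‖coef k a‖ ≤ ‖a‖ := by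
  rw [norm_eq]
  exact (summable_coef a).le_tsum k fun _ _ => norm_nonneg _

lemma ext_coef {a b : Wiener} (h : ∀ k, coef k a = coef k b) : a = b :=
  lp.ext (funext h)

section lift
variable {Y : Type*} [NormedAddCommGroup Y] [NormedSpace ℂ Y] [CompleteSpace Y]

lemma lift_apply (x : ℤ → Y) (hx : ∀ k, ‖x k‖ ≤ 1) (a : Wiener) :
    lift x hx a = ∑' k, coef k a • x k := rfl

lemma lift_mono (x : ℤ → Y) (hx : ∀ k, ‖x k‖ ≤ 1) (k : ℤ) : lift x hx (mono k) = x k :=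
  EllOne.lift_δ x hx k

lemma ext_mono {Z : Type*} [NormedAddCommGroup Z] [NormedSpace ℂ Z] {f g : Wiener →L[ℂ] Z}
    (h : ∀ k, f (mono k) = g (mono k)) : f = g := by
  have := EllOne.ext_δ
    (f := { toFun := f, map_add' := f.map_add, map_smul' := f.map_smul, cont := f.cont })
    (g := { toFun := g, map_add' := g.map_add, map_smul' := g.map_smul, cont := g.cont }) h
  ext a
  exact congrArg (fun f => f a) this

lemma norm_lift_le (x : ℤ → Y) (hx : ∀ k, ‖x k‖ ≤ 1) (a : Wiener) : ‖lift x hx a‖ ≤ ‖a‖ := by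
  have := (EllOne.lift x hx).le_of_opNorm_le (EllOne.norm_lift_le x hx) a
  rwa [one_mul] at this

end lift

lemma mono_mul (j k : ℤ) : mono j * mono k = mono (j + k) := conv_δ_δ j k

lemma mono_zero : mono 0 = 1 := rfl

lemma norm_mono_le (k : ℤ) : ‖mono k‖ ≤ 1 := norm_δ k

lemma coef_mono (k j : ℤ) : coef k (mono j) = if k = j then 1 else 0 := δ_apply j k

/-- Evaluation at a point of the unit circle. -/
noncomputable def ev (ζ : ℂ) (hζ : ‖ζ‖ = 1) : Wiener →L[ℂ] ℂ :=
  lift (fun k => ζ ^ k) (fun k => by simp [hζ])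

lemma ev_mono (ζ : ℂ) (hζ : ‖ζ‖ = 1) (k : ℤ) : ev ζ hζ (mono k) = ζ ^ k := lift_mono _ _ k

lemma ev_one (ζ : ℂ) (hζ : ‖ζ‖ = 1) : ev ζ hζ 1 = 1 := by
  rw [← mono_zero, ev_mono]; simp

lemma ev_mul (ζ : ℂ) (hζ : ‖ζ‖ = 1) (a b : Wiener) :
    ev ζ hζ (a * b) = ev ζ hζ a * ev ζ hζ b := by
  have h0 : ζ ≠ 0 := by rintro rfl; simp at hζ
  have h1 : ∀ j, (ev ζ hζ).comp (ContinuousLinearMap.mul ℂ Wiener (mono j))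
      = (ContinuousLinearMap.mul ℂ ℂ (ζ ^ j)).comp (ev ζ hζ) := by
    intro j
    refine ext_mono fun k => ?_
    simp [mono_mul, ev_mono, zpow_add₀ h0]
  have h2 : (ev ζ hζ).comp ((ContinuousLinearMap.mul ℂ Wiener).flip b)
      = ((ContinuousLinearMap.mul ℂ ℂ).flip (ev ζ hζ b)).comp (ev ζ hζ) := by
    refine ext_mono fun j => ?_
    have := congrArg (fun f => f b) (h1 j)
    simpa [ev_mono, mul_comm] using this
  simpa [mul_comm] using congrArg (fun f => f a) h2

lemma norm_ev_le (ζ : ℂ) (hζ : ‖ζ‖ = 1) (a : Wiener) : ‖ev ζ hζ a‖ ≤ ‖a‖ := norm_lift_le _ _ a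

/-- Evaluation at a point of the closed unit disc of the part of non-negative frequencies. -/
noncomputable def hol (a : Wiener) (ζ : ℂ) : ℂ := ∑' k : ℕ, coef k a * ζ ^ k

/-- Projection to strictly negative frequencies. -/
noncomputable def neg : Wiener →L[ℂ] Wiener :=
  lift (fun k => if k < 0 then mono k else 0) (fun k => by
    split_ifs
    · exact norm_mono_le k
    · simp)

lemma neg_mono (k : ℤ) : neg (mono k) = if k < 0 then mono k else 0 := lift_mono _ _ k

lemma coef_neg (k : ℤ) (a : Wiener) : coef k (neg a) = if k < 0 then coef k a else 0 := by
  have : (coef k).comp neg = if k < 0 then coef k else 0 := by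
    refine ext_mono fun j => ?_
    simp only [ContinuousLinearMap.comp_apply, neg_mono]
    split_ifs with h1 h2 h2
    · rfl
    · rw [coef_mono, if_neg (by omega)]; rfl
    · rw [coef_mono, if_neg (by omega)]; simp
    · simp
  have := congrArg (fun f => f a) this
  simp only [ContinuousLinearMap.comp_apply] at this
  rw [this]
  split_ifs <;> rfl

lemma neg_neg_eq (a : Wiener) : neg (neg a) = neg a := by
  refine ext_coef fun k => ?_
  simp only [coef_neg]
  split_ifs <;> rfl

lemma norm_neg_le (a : Wiener) : ‖neg a‖ ≤ ‖a‖ := norm_lift_le _ _ a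

/-- Pointwise complex conjugation on the circle, `(∑ aₖ ζᵏ)* = ∑ conj(a₋ₖ) ζᵏ`. -/
noncomputable def cj : Wiener →L[ℝ] Wiener :=
  LinearMap.mkContinuous
    { toFun := fun a => (⟨fun k => (starRingEnd ℂ) (coef (-k) a), memℓp_gen (by
        have := ((Equiv.neg ℤ).summable_iff (f := fun k => ‖coef k a‖)).2 (summable_coef a)
        simpa [Function.comp_def] using this)⟩ : EllOne)
      map_add' := fun a b => by
        refine ext_coef fun k => ?_
        change (starRingEnd ℂ) (coef (-k) (a + b)) = (starRingEnd ℂ) (coef (-k) a) + (starRingEnd ℂ) (coef (-k) b)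
        simp
      map_smul' := fun c a => by
        refine ext_coef fun k => ?_
        change (starRingEnd ℂ) (coef (-k) (c • a)) = (c : ℂ) * (starRingEnd ℂ) (coef (-k) a)
        have : coef (-k) (c • a) = (c : ℂ) * coef (-k) a := (coef (-k)).map_smul (c : ℂ) a
        rw [this]; simp } 1 (fun a => by
      rw [one_mul, norm_eq, norm_eq]
      change ∑' k, ‖(starRingEnd ℂ) (coef (-k) a)‖ ≤ _
      simp only [RCLike.norm_conj]
      exact ((Equiv.neg ℤ).tsum_eq (fun k => ‖coef k a‖)).le)

lemma coef_cj (k : ℤ) (a : Wiener) : coef k (cj a) = (starRingEnd ℂ) (coef (-k) a) := rfl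

lemma cj_cj (a : Wiener) : cj (cj a) = a := ext_coef fun k => by simp [coef_cj]

lemma cj_mono (k : ℤ) : cj (mono k) = mono (-k) := ext_coef fun j => by
  simp only [coef_cj, coef_mono]
  by_cases h : j = -k
  · simp [h]
  · rw [if_neg h, if_neg (by omega)]; simp

lemma cj_smul (c : ℂ) (a : Wiener) : cj (c • a) = (starRingEnd ℂ) c • cj a := ext_coef fun j => by
  simp [coef_cj]

lemma coef_mono_mul (j k : ℤ) (a : Wiener) : coef k (mono j * a) = coef (k - j) a := by
  have : (coef k).comp (ContinuousLinearMap.mul ℂ Wiener (mono j)) = coef (k - j) := by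
    refine ext_mono fun i => ?_
    simp only [ContinuousLinearMap.comp_apply, ContinuousLinearMap.mul_apply', mono_mul, coef_mono]
    by_cases h : k = j + i
    · simp [h]
    · rw [if_neg h, if_neg (by omega)]
  exact congrArg (fun f => f a) this

lemma ev_apply (ζ : ℂ) (hζ : ‖ζ‖ = 1) (a : Wiener) : ev ζ hζ a = ∑' k, coef k a * ζ ^ k := rfl

lemma ev_cj (ζ : ℂ) (hζ : ‖ζ‖ = 1) (a : Wiener) :
    ev ζ hζ (cj a) = (starRingEnd ℂ) (ev ζ hζ a) := by
  rw [ev_apply, ev_apply, conj_tsum, ← (Equiv.neg ℤ).tsum_eq]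
  refine tsum_congr fun k => ?_
  have h0 : ζ⁻¹ = (starRingEnd ℂ) ζ := Complex.inv_eq_conj hζ
  simp [coef_cj, ← h0]

/-- On the circle, `hol a` is the value of `a` when `a` has no negative frequencies. -/
lemma hol_eq_ev (a : Wiener) (ha : neg a = 0) (ζ : ℂ) (hζ : ‖ζ‖ = 1) : hol a ζ = ev ζ hζ a := by
  rw [ev_apply, hol]
  have hinj : Function.Injective (fun k : ℕ => (k : ℤ)) := Nat.cast_injective
  rw [← hinj.tsum_eq (f := fun k : ℤ => coef k a * ζ ^ k)]
  · simp
  · intro k hk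
    by_contra hk'
    apply hk
    have hneg : k < 0 := by
      by_contra h
      exact hk' ⟨k.toNat, by simp; omega⟩
    have := congrArg (coef k) ha
    rw [coef_neg, if_pos hneg] at this
    simp [this]

lemma summable_coef_nat (a : Wiener) : Summable fun k : ℕ => ‖coef (k : ℤ) a‖ :=
  (summable_coef a).comp_injective Nat.cast_injective

lemma continuousOn_hol (a : Wiener) : ContinuousOn (hol a) (closedBall 0 1) := by
  refine continuousOn_tsum (u := fun k : ℕ => ‖coef (k : ℤ) a‖) (fun k => by fun_prop)
    (summable_coef_nat a) fun k ζ hζ => ?_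
  rw [norm_mul, norm_pow]
  exact mul_le_of_le_one_right (norm_nonneg _) (pow_le_one₀ (norm_nonneg _) (by simpa using hζ))

lemma differentiableOn_hol (a : Wiener) : DifferentiableOn ℂ (hol a) (ball 0 1) := by
  refine differentiableOn_tsum_of_summable_norm (u := fun k : ℕ => ‖coef (k : ℤ) a‖)
    (summable_coef_nat a) (fun k => by fun_prop) isOpen_ball fun k ζ hζ => ?_
  rw [norm_mul, norm_pow]
  exact mul_le_of_le_one_right (norm_nonneg _) (pow_le_one₀ (norm_nonneg _) (by
    have := mem_ball_zero_iff.1 hζ; exact this.le))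

end Wiener

/-! ### Superposition by real-analytic functions -/

namespace Wiener

instance : NormOneClass Wiener := ⟨by
  change ‖(lp.single 1 (0 : ℤ) (1 : ℂ) : EllOne)‖ = 1
  rw [lp.norm_single (by simp)]; simp⟩

lemma ev_prod (ζ : ℂ) (hζ : ‖ζ‖ = 1) {ι : Type*} (s : Finset ι) (x : ι → Wiener) :
    ev ζ hζ (∏ i ∈ s, x i) = ∏ i ∈ s, ev ζ hζ (x i) := by
  classical
  induction s using Finset.induction_on with
  | empty => simp [ev_one]
  | insert a s ha ih => rw [Finset.prod_insert ha, Finset.prod_insert ha, ev_mul, ih]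

section superposition
variable {E : Type*} [NormedAddCommGroup E] [NormedSpace ℝ E] {κ : Type*} [Fintype κ]

/-- The power series `q`, restricted to the span of the vectors `c k`, with the real coordinates
replaced by elements of the Wiener algebra. -/
noncomputable def substSeries (q : FormalMultilinearSeries ℝ E ℂ) (c : κ → E) :
    FormalMultilinearSeries ℝ (κ → Wiener) Wiener := fun k =>
  ∑ i : Fin k → κ, (q k (fun l => c (i l))) •
    ((ContinuousMultilinearMap.mkPiAlgebra ℝ (Fin k) Wiener).compContinuousLinearMap
      (fun l => ContinuousLinearMap.proj (R := ℝ) (φ := fun _ : κ => Wiener) (i l)))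

lemma substSeries_apply (q : FormalMultilinearSeries ℝ E ℂ) (c : κ → E) (k : ℕ)
    (x : Fin k → κ → Wiener) : substSeries q c k x =
      ∑ i : Fin k → κ, (q k (fun l => c (i l))) • ∏ l, x l (i l) := by
  simp [substSeries]

/-- The `ℓ¹` norm is submultiplicative, so `substSeries q c` is majorized termwise by `q` evaluated
at the sum of the `‖c j‖`. -/
lemma norm_substSeries_le (q : FormalMultilinearSeries ℝ E ℂ) (c : κ → E) (k : ℕ) :
    ‖substSeries q c k‖ ≤ ‖q k‖ * (∑ j, ‖c j‖) ^ k := by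
  have hterm : ∀ i : Fin k → κ, ‖(q k (fun l => c (i l))) •
    ((ContinuousMultilinearMap.mkPiAlgebra ℝ (Fin k) Wiener).compContinuousLinearMap
      (fun l => ContinuousLinearMap.proj (R := ℝ) (φ := fun _ : κ => Wiener) (i l)))‖
      ≤ ‖q k‖ * ∏ l, ‖c (i l)‖ := by
    intro i
    rw [norm_smul]
    refine (mul_le_of_le_one_right (norm_nonneg _) ?_).trans ((q k).le_opNorm _)
    refine ContinuousMultilinearMap.opNorm_le_bound zero_le_one fun x => ?_
    simp only [ContinuousMultilinearMap.compContinuousLinearMap_apply,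
      ContinuousMultilinearMap.mkPiAlgebra_apply, ContinuousLinearMap.proj_apply, one_mul]
    refine (Finset.norm_prod_le _ _).trans ?_
    exact Finset.prod_le_prod (fun _ _ => norm_nonneg _) fun l _ => norm_le_pi_norm (x l) (i l)
  refine (norm_sum_le _ _).trans ((Finset.sum_le_sum fun i _ => hterm i).trans ?_)
  rw [← Finset.mul_sum]
  refine le_of_eq (congrArg _ ?_)
  have := Finset.prod_univ_sum (fun _ : Fin k => (Finset.univ : Finset κ)) (fun _ j => ‖c j‖)
  simp only [Fintype.piFinset_univ] at this
  rw [← this]; simp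

lemma substSeries_radius_pos (q : FormalMultilinearSeries ℝ E ℂ) (c : κ → E) (hq : 0 < q.radius) :
    0 < (substSeries q c).radius := by
  obtain ⟨r, hr0, hr⟩ := ENNReal.lt_iff_exists_nnreal_btwn.1 hq
  obtain ⟨C, hC, hb⟩ := q.norm_mul_pow_le_of_lt_radius hr
  have hr0' : (0 : ℝ) < r := by exact_mod_cast hr0
  set B : ℝ := ∑ j, ‖c j‖ with hB
  have hB0 : 0 ≤ B := Finset.sum_nonneg fun _ _ => norm_nonneg _
  set r' : NNReal := ⟨r / (B + 1), by positivity⟩ with hr'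
  have hr'0 : 0 < r' := by
    rw [← NNReal.coe_pos]
    change (0 : ℝ) < r / (B + 1)
    positivity
  have key : (r' : ENNReal) ≤ (substSeries q c).radius := by
    refine (substSeries q c).le_radius_of_bound C fun n => ?_
    refine le_trans ?_ (hb n)
    refine (mul_le_mul_of_nonneg_right (norm_substSeries_le q c n) (by positivity)).trans ?_
    rw [mul_assoc, ← mul_pow]
    gcongr
    change B * (r / (B + 1)) ≤ r
    rw [mul_div_assoc', div_le_iff₀ (by positivity)]
    nlinarith
  exact lt_of_lt_of_le (by exact_mod_cast hr'0) key

/-- Superposition operators on the Wiener algebra: an analytic function `Φ` acts on tuples of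
small elements of the Wiener algebra, the action is strictly differentiable at the origin, and it
is compatible with evaluation at points of the circle. -/
theorem exists_superposition {Φ : E → ℂ} {p : E} (hΦ : AnalyticAt ℝ Φ p) (c : κ → E) :
    ∃ (S : (κ → Wiener) → Wiener) (L : (κ → Wiener) →L[ℝ] Wiener), HasStrictFDerivAt S L 0 ∧
      (∀ x, L x = ∑ k, (fderiv ℝ Φ p (c k)) • x k) ∧ S 0 = Φ p • (1 : Wiener) ∧
      ∀ᶠ x in 𝓝 (0 : κ → Wiener), ∀ (ζ : ℂ) (hζ : ‖ζ‖ = 1) (t : κ → ℝ),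
        (∀ k, ev ζ hζ (x k) = t k) → ev ζ hζ (S x) = Φ (p + ∑ k, t k • c k) := by
  obtain ⟨q, hq⟩ := hΦ
  obtain ⟨r, hqr⟩ := hq
  have hpos : 0 < (substSeries q c).radius :=
    substSeries_radius_pos q c (lt_of_lt_of_le hqr.r_pos hqr.r_le)
  have hS := (substSeries q c).hasFPowerSeriesOnBall hpos
  refine ⟨(substSeries q c).sum, _, hS.hasFPowerSeriesAt.hasStrictFDerivAt, ?_, ?_, ?_⟩
  · intro x
    rw [hqr.hasFPowerSeriesAt.hasFDerivAt.fderiv]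
    simp only [continuousMultilinearCurryFin1_apply, substSeries_apply]
    rw [← (Equiv.funUnique (Fin 1) κ).symm.sum_comp]
    refine Finset.sum_congr rfl fun k _ => ?_
    simp only [Fin.prod_univ_one]
    congr 2
  · have h0 := hS.coeff_zero (fun _ => 0)
    rw [← h0, substSeries_apply, ← hqr.coeff_zero (fun _ => 0)]
    simp only [Finset.univ_unique, Finset.sum_singleton, Finset.univ_eq_empty, Finset.prod_empty]
    congr 2
    ext l
    exact l.elim0
  · have h1 : ∀ᶠ x in 𝓝 (0 : κ → Wiener),
        x ∈ Metric.eball (0 : κ → Wiener) (substSeries q c).radius :=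
      Metric.eball_mem_nhds _ hpos
    have h2 : ∀ᶠ x in 𝓝 (0 : κ → Wiener), ENNReal.ofReal (‖x‖ * ∑ k, ‖c k‖) < r := by
      have hc : Continuous fun x : κ → Wiener => ENNReal.ofReal (‖x‖ * ∑ k, ‖c k‖) :=
        ENNReal.continuous_ofReal.comp (by fun_prop)
      refine hc.continuousAt.eventually_lt continuousAt_const ?_
      simpa using hqr.r_pos
    filter_upwards [h1, h2] with x hx1 hx2 ζ hζ t ht
    -- both sides are sums of the same power series, the evaluation being multiplicative
    have hsum := (hS.hasSum hx1).mapL ((ev ζ hζ).restrictScalars ℝ)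
    have hy : ∑ k, t k • c k ∈ Metric.eball (0 : E) r := by
      rw [Metric.mem_eball, edist_zero_right, ← ofReal_norm]
      refine lt_of_le_of_lt (ENNReal.ofReal_le_ofReal ?_) hx2
      refine (norm_sum_le _ _).trans ?_
      rw [Finset.mul_sum]
      refine Finset.sum_le_sum fun k _ => ?_
      rw [norm_smul]
      refine mul_le_mul_of_nonneg_right ?_ (norm_nonneg _)
      have : ‖((t k : ℝ) : ℂ)‖ ≤ ‖x k‖ := by rw [← ht k]; exact norm_ev_le _ _ _
      rw [Complex.norm_real] at this
      exact this.trans (norm_le_pi_norm x k)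
    have hsum2 := hqr.hasSum hy
    rw [zero_add] at hsum
    refine HasSum.unique hsum (?_ : HasSum _ _)
    refine (congrArg (fun g => HasSum g (Φ (p + ∑ k, t k • c k))) (funext fun k => ?_)).mpr hsum2
    rw [substSeries_apply]
    simp only [ContinuousLinearMap.coe_restrictScalars', map_sum, map_smul, ev_prod, ht]
    rw [ContinuousMultilinearMap.map_sum]
    refine Finset.sum_congr rfl fun i _ => ?_
    rw [ContinuousMultilinearMap.map_smul_univ]
    simp [mul_comm]

end superposition
end Wiener

/-! ### Maps into the Wiener algebra and their derivatives -/

namespace Wiener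

section discs
variable {E : Type*} [NormedAddCommGroup E] [NormedSpace ℝ E] {ι : Type*}

/-- The pairs (real part, imaginary part) of a tuple of elements of the Wiener algebra. -/
noncomputable def reIm : (ι → Wiener) →L[ℝ] (ι ⊕ ι → Wiener) :=
  ContinuousLinearMap.pi (Sum.elim
    (fun i => (1 / 2 : ℂ) • ((ContinuousLinearMap.id ℝ Wiener + cj).comp
      (ContinuousLinearMap.proj (R := ℝ) (φ := fun _ : ι => Wiener) i)))
    (fun i => (-I / 2 : ℂ) • ((ContinuousLinearMap.id ℝ Wiener - cj).comp
      (ContinuousLinearMap.proj (R := ℝ) (φ := fun _ : ι => Wiener) i))))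

lemma reIm_inl (z : ι → Wiener) (i : ι) : reIm z (Sum.inl i) = (1 / 2 : ℂ) • (z i + cj (z i)) := rfl
lemma reIm_inr (z : ι → Wiener) (i : ι) : reIm z (Sum.inr i) = (-I / 2 : ℂ) • (z i - cj (z i)) := rfl

/-- `exists_superposition` in complex form: with `b' i` in the role of `I • b i`, the action of `Φ`
on a tuple `z` is the Fourier series of `ζ ↦ Φ (p + ∑ (Re zᵢ(ζ) bᵢ + Im zᵢ(ζ) b'ᵢ))`, and its
linearization is written as a part linear in `z` plus a part linear in the conjugate of `z`. -/
theorem exists_subst [Fintype ι] {Φ : E → ℂ} {p : E} (hΦ : AnalyticAt ℝ Φ p) (b b' : ι → E) :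
    ∃ (S : (ι → Wiener) → Wiener) (L : (ι → Wiener) →L[ℝ] Wiener), HasStrictFDerivAt S L 0 ∧
      (∀ z, L z = ∑ i, ((1 / 2 * (fderiv ℝ Φ p (b i) - I * fderiv ℝ Φ p (b' i)) : ℂ) • z i +
        (1 / 2 * (fderiv ℝ Φ p (b i) + I * fderiv ℝ Φ p (b' i)) : ℂ) • cj (z i))) ∧
      S 0 = Φ p • (1 : Wiener) ∧
      ∀ᶠ z in 𝓝 (0 : ι → Wiener), ∀ (ζ : ℂ) (hζ : ‖ζ‖ = 1),
        ev ζ hζ (S z) =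
          Φ (p + ∑ i, ((ev ζ hζ (z i)).re • b i + (ev ζ hζ (z i)).im • b' i)) := by
  obtain ⟨S, L, hS, hL, hS0, hev⟩ := exists_superposition hΦ (Sum.elim b b')
  refine ⟨S ∘ reIm, L.comp reIm, ?_, ?_, ?_, ?_⟩
  · refine HasStrictFDerivAt.comp (0 : ι → Wiener) (f := reIm) ?_ reIm.hasStrictFDerivAt
    rwa [map_zero]
  · intro z
    rw [ContinuousLinearMap.comp_apply, hL, Fintype.sum_sum_type, ← Finset.sum_add_distrib]
    refine Finset.sum_congr rfl fun i _ => ?_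
    rw [reIm_inl, reIm_inr]
    simp only [Sum.elim_inl, Sum.elim_inr]
    module
  · simpa using hS0
  · have hc : Filter.Tendsto (reIm : (ι → Wiener) → _) (𝓝 0) (𝓝 0) := by
      have := (reIm (ι := ι)).continuous.tendsto 0
      rwa [map_zero] at this
    filter_upwards [hc.eventually hev] with z hz ζ hζ
    have := hz ζ hζ (Sum.elim (fun i => (ev ζ hζ (z i)).re) (fun i => (ev ζ hζ (z i)).im)) ?_
    · rw [Function.comp_apply, this, Fintype.sum_sum_type, Finset.sum_add_distrib]
      simp
    · rintro (i | i)
      · rw [reIm_inl, map_smul, map_add, ev_cj, Complex.add_conj]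
        simp
      · rw [reIm_inr, map_smul, map_sub, ev_cj, Complex.sub_conj]
        simp only [smul_eq_mul, Sum.elim_inr, ofReal_mul, ofReal_ofNat]
        linear_combination (-(ev ζ hζ (z i)).im : ℂ) * I_sq

/-- The implicit function theorem for a one-parameter family of equations `G (s, y) = 0` whose
linearization at the origin is `y = 0`: the solution is `o(s)`. -/
theorem exists_curve {Y : Type*} [NormedAddCommGroup Y] [NormedSpace ℝ Y] [CompleteSpace Y]
    {G : ℝ × Y → Y} (hG : HasStrictFDerivAt G (ContinuousLinearMap.snd ℝ ℝ Y) 0) (hG0 : G 0 = 0) :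
    ∃ X : ℝ → Y, (∀ᶠ s in 𝓝 (0 : ℝ), G (s, X s) = 0) ∧ X =o[𝓝 0] (fun s : ℝ => s) := by
  have hΨ : HasStrictFDerivAt (fun t : ℝ × Y => (t.1, G t))
      ((ContinuousLinearEquiv.refl ℝ (ℝ × Y) : (ℝ × Y) ≃L[ℝ] ℝ × Y) : (ℝ × Y) →L[ℝ] ℝ × Y) 0 := by
    have := (hasStrictFDerivAt_fst (𝕜 := ℝ) (E := ℝ) (F := Y) (p := 0)).prodMk hG
    refine this.congr_fderiv ?_
    ext <;> simp
  have hi := hΨ.to_localInverse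
  have hr := hΨ.eventually_right_inverse
  set g := hΨ.localInverse with hg
  simp only [hG0, Prod.fst_zero] at hi hr
  have h0 : g (0, 0) = 0 := by
    have := hΨ.localInverse_apply_image
    simpa [hG0] using this
  have hc : Filter.Tendsto (fun s : ℝ => (s, (0 : Y))) (𝓝 0) (𝓝 (0, 0)) :=
    (Continuous.prodMk_left (0 : Y)).tendsto 0
  refine ⟨fun s => (g (s, 0)).2, ?_, ?_⟩
  · filter_upwards [hc.eventually hr] with s hs
    have h1 : (g (s, 0)).1 = s := congrArg Prod.fst hs
    have h2 : G (g (s, 0)) = 0 := congrArg Prod.snd hs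
    have h3 : (s, (g (s, 0)).2) = g (s, 0) := Prod.ext h1.symm rfl
    change G (s, (g (s, 0)).2) = 0
    rw [h3, h2]
  · have hd := hi.hasFDerivAt.isLittleO
    have hd2 := hd.comp_tendsto hc
    have h3 : (fun s : ℝ => (g (s, 0)).2) =O[𝓝 0]
      ((fun y => g y - g (0, 0) - (((ContinuousLinearEquiv.refl ℝ (ℝ × Y)).symm : (ℝ × Y) ≃L[ℝ] ℝ × Y) : (ℝ × Y) →L[ℝ] ℝ × Y) (y - (0, 0))) ∘
        fun s : ℝ => (s, (0 : Y))) := by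
      refine Asymptotics.isBigO_of_le _ fun s => ?_
      simp only [Function.comp_apply, h0]
      refine le_trans (le_of_eq ?_) (norm_snd_le _)
      simp
    refine h3.trans_isLittleO (hd2.trans_isBigO ?_)
    refine Asymptotics.isBigO_of_le _ fun s => ?_
    simp

end discs
end Wiener

/-! ### Parametrization of small discs -/

namespace Wiener

/-- `a ↦ (neg a)*`, with values in the strictly positive frequencies. -/
noncomputable def refl : Wiener →L[ℝ] Wiener := cj.comp (neg.restrictScalars ℝ)

/-- `a ↦ Re (coef 0 a) · 1`. -/
noncomputable def reC0 : Wiener →L[ℝ] Wiener :=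
  (reCLM.comp ((coef 0).restrictScalars ℝ)).smulRight (1 : Wiener)

/-- Pointwise real part. -/
noncomputable def avg : Wiener →L[ℝ] Wiener := (1 / 2 : ℝ) • (ContinuousLinearMap.id ℝ Wiener + cj)

lemma refl_apply (a : Wiener) : refl a = cj (neg a) := rfl
lemma reC0_apply (a : Wiener) : reC0 a = (coef 0 a).re • (1 : Wiener) := rfl
lemma avg_apply (a : Wiener) : avg a = (1 / 2 : ℝ) • (a + cj a) := rfl

lemma coef_real_smul (k : ℤ) (r : ℝ) (a : Wiener) : coef k (r • a) = r * coef k a := by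
  rw [(coef k).map_smul_of_tower r a, Complex.real_smul]

lemma coef_one (k : ℤ) : coef k 1 = if k = 0 then 1 else 0 := by rw [← mono_zero, coef_mono]

lemma coef_refl (k : ℤ) (a : Wiener) : coef k (refl a) =
    if 0 < k then (starRingEnd ℂ) (coef (-k) a) else 0 := by
  rw [refl_apply, coef_cj, coef_neg]
  by_cases h : 0 < k <;> simp [h]

lemma coef_reC0 (k : ℤ) (a : Wiener) : coef k (reC0 a) = if k = 0 then ((coef 0 a).re : ℂ) else 0 := by
  rw [reC0_apply, coef_real_smul, coef_one]; simp

lemma neg_refl (a : Wiener) : neg (refl a) = 0 := ext_coef fun k => by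
  rw [coef_neg, coef_refl, map_zero]; split_ifs <;> first | rfl | omega

lemma neg_reC0 (a : Wiener) : neg (reC0 a) = 0 := ext_coef fun k => by
  rw [coef_neg, coef_reC0, map_zero]; split_ifs <;> first | rfl | omega

lemma cj_refl (a : Wiener) : cj (refl a) = neg a := by rw [refl_apply, cj_cj]

lemma cj_reC0 (a : Wiener) : cj (reC0 a) = reC0 a := ext_coef fun k => by
  simp only [coef_cj, coef_reC0, neg_eq_zero]; split_ifs <;> simp

lemma reC0_reC0 (a : Wiener) : reC0 (reC0 a) = reC0 a := ext_coef fun k => by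
  simp [coef_reC0]

lemma reC0_refl (a : Wiener) : reC0 (refl a) = 0 := ext_coef fun k => by
  simp [coef_reC0, coef_refl]

lemma reC0_neg (a : Wiener) : reC0 (neg a) = 0 := ext_coef fun k => by
  simp [coef_reC0, coef_neg]

lemma neg_real_smul (r : ℝ) (a : Wiener) : neg (r • a) = r • neg a := neg.map_smul_of_tower r a

lemma neg_mul_refl (a : Wiener) : neg (mono 1 * refl a) = 0 := ext_coef fun k => by
  rw [coef_neg, coef_mono_mul, coef_refl, map_zero]; split_ifs <;> first | rfl | omega

lemma cj_mono_mul (a : Wiener) : cj (mono 1 * a) = mono (-1) * cj a := ext_coef fun k => by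
  rw [coef_cj, coef_mono_mul, coef_mono_mul, coef_cj]
  rw [show -k - 1 = -(k - -1) by ring]

lemma neg_mul_cj_mul_refl (a : Wiener) : neg (mono 1 * cj (mono 1 * refl a)) = neg a := by
  rw [cj_mono_mul, cj_refl, ← mul_assoc, mono_mul]
  change neg (mono 0 * neg a) = _
  rw [mono_zero, one_mul, neg_neg_eq]

lemma neg_mono_mul_of {a : Wiener} (ha : neg a = 0) : neg (mono 1 * a) = 0 := ext_coef fun k => by
  have := congrArg (coef (k - 1)) ha
  rw [coef_neg, map_zero] at this
  rw [coef_neg, coef_mono_mul, map_zero]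
  split_ifs with h
  · rwa [if_pos (by omega)] at this
  · rfl

lemma neg_mono_mul_mono : neg (mono 1 * mono 1) = 0 := by rw [mono_mul, neg_mono]; rfl

lemma neg_mul_cj_mono : neg (mono 1 * cj (mono 1)) = 0 := by
  rw [cj_mono, mono_mul, neg_mono]; rfl

/-- A real element whose coefficients of non-positive index vanish is zero. -/
lemma avg_eq_zero {a : Wiener} (h1 : neg (avg a) = 0) (h2 : reC0 (avg a) = 0) : avg a = 0 := by
  have hsymm : ∀ k, coef k (avg a) = (starRingEnd ℂ) (coef (-k) (avg a)) := by
    intro k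
    simp only [avg_apply, coef_real_smul, map_add, coef_cj, neg_neg, map_mul, conj_ofReal, conj_conj]
    ring
  have hneg : ∀ k < 0, coef k (avg a) = 0 := by
    intro k hk
    have := congrArg (coef k) h1
    rwa [coef_neg, if_pos hk, map_zero] at this
  refine ext_coef fun k => ?_
  rw [map_zero]
  rcases lt_trichotomy k 0 with hk | rfl | hk
  · exact hneg k hk
  · have hre := congrArg (coef 0) h2
    rw [coef_reC0, if_pos rfl, map_zero, ofReal_eq_zero] at hre
    have him := hsymm 0
    rw [neg_zero, eq_comm, Complex.conj_eq_iff_im] at him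
    exact Complex.ext hre him
  · rw [hsymm, hneg _ (by omega), map_zero]

section discs
variable {ι : Type*}

/-- The parametrization of the discs: `t = (s, (x, σ))` is sent to the tuple `z` whose component
`i0` is `(2/λ) ((neg x_{i0})* + ½ Re coef₀ x_{i0})` and whose other components are
`s v_i ζ + ζ (neg x_i)*`. -/
noncomputable def zmap [DecidableEq ι] (i0 : ι) (lam : ℝ) (v : ι → ℂ) :
    ℝ × ((ι → Wiener) × Wiener) →L[ℝ] (ι → Wiener) :=
  ContinuousLinearMap.pi fun i =>
    ((ContinuousLinearMap.fst ℝ ℝ ((ι → Wiener) × Wiener)).smulRight (v i • mono 1)) +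
    (if i = i0 then (2 / lam) • (refl + (1 / 2 : ℝ) • reC0)
      else (ContinuousLinearMap.mul ℝ Wiener (mono 1)).comp refl).comp
      ((ContinuousLinearMap.proj (R := ℝ) (φ := fun _ : ι => Wiener) i).comp
        ((ContinuousLinearMap.fst ℝ (ι → Wiener) Wiener).comp
          (ContinuousLinearMap.snd ℝ ℝ ((ι → Wiener) × Wiener))))

variable [DecidableEq ι] (i0 : ι) (lam : ℝ) (v : ι → ℂ)

lemma zmap_self (hv : v i0 = 0) (t : ℝ × ((ι → Wiener) × Wiener)) : zmap i0 lam v t i0 =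
    (2 / lam) • (refl (t.2.1 i0) + (1 / 2 : ℝ) • reC0 (t.2.1 i0)) := by
  simp [zmap, hv]

lemma zmap_ne {i : ι} (hi : i ≠ i0) (t : ℝ × ((ι → Wiener) × Wiener)) : zmap i0 lam v t i =
    t.1 • v i • mono 1 + mono 1 * refl (t.2.1 i) := by
  simp [zmap, hi]

lemma neg_zmap (hv : v i0 = 0) (t : ℝ × ((ι → Wiener) × Wiener)) (i : ι) :
    neg (zmap i0 lam v t i) = 0 := by
  by_cases hi : i = i0
  · subst hi
    rw [zmap_self _ _ _ hv, neg_real_smul, map_add, neg_real_smul, neg_refl, neg_reC0]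
    simp
  · rw [zmap_ne _ _ _ hi, map_add, neg_real_smul, map_smul, neg_mono, neg_mul_refl]
    simp

lemma zmap_split (t : ℝ × ((ι → Wiener) × Wiener)) :
    zmap i0 lam v t = t.1 • (fun i => v i • mono 1) + zmap i0 lam v (0, t.2) := by
  ext1 i
  simp [zmap]

end discs
end Wiener

/-! ### Existence of small stationary discs -/

namespace Wiener

/-- The component `i0` of `zmap` solves the linearized equation `(λ/2)(z + z*) = ω` up to the
projection of `ω` to real functions. -/
lemma lin_rho {lam : ℝ} (hlam : 0 < lam) (ω : Wiener) :
    (lam / 2 : ℝ) • ((2 / lam) • (refl ω + (1 / 2 : ℝ) • reC0 ω) +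
      cj ((2 / lam) • (refl ω + (1 / 2 : ℝ) • reC0 ω))) = refl ω + neg ω + reC0 ω := by
  rw [map_smul, map_add, map_smul, cj_refl, cj_reC0, ← smul_add, smul_smul,
    show lam / 2 * (2 / lam) = 1 by field_simp]
  module

lemma neg_one_eq : neg 1 = 0 := by rw [← mono_zero, neg_mono]; rfl

lemma avg_lin_rho (ω : Wiener) :
    avg (refl ω + neg ω + reC0 ω) = refl ω + neg ω + reC0 ω := by
  rw [avg_apply, map_add, map_add, cj_refl, cj_reC0, refl_apply]
  module

section discs
variable {E : Type*} [NormedAddCommGroup E] [NormedSpace ℝ E] {ι : Type*} [Fintype ι]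
  [DecidableEq ι]

/-- Small stationary discs near a boundary point `p`, with prescribed complex tangential direction
`v`. In applications `b` is a complex basis, `b' i = I • b i`, `ρ` is a defining function, and
`R i = ∂ρ(b i)`; the vector `b i0` is transverse to the boundary and the others are complex
tangential. The hypothesis `hβ` says that `b` is orthonormal for the Levi form of `ρ` at `p`.

The disc of parameter `s` is `p + z s`, where `z s` has components without negative frequencies
and equals `s v ζ + o(s)`; `1 + 2 Re τ` is its positive weight, and `H` is the holomorphic
extension of `ζ` times the weight times `∂ρ`.

The unknowns `x`, `σ` parametrize `z` by `zmap` and the weight by `1 + 2 Re (neg σ)*`. The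
equations are that `ρ` vanishes on the disc, that the negative frequencies of `ζ P Rⱼ` vanish for
`j ≠ i0`, and that those of `P R_{i0}` vanish. Each equation only sees part of the frequencies;
the others are added as trivial equations, which makes the linearization with respect to `(x, σ)`
the identity, so that `exists_curve` applies. -/
theorem exists_small_discs (i0 : ι) (b b' : ι → E) {p : E} {ρ : E → ℝ} {R : ι → E → ℂ}
    (hρ : AnalyticAt ℝ ρ p) (hR : ∀ i, AnalyticAt ℝ (R i) p) {lam : ℝ} (hlam : 0 < lam)
    (hp : ρ p = 0) (hρb : ∀ i, fderiv ℝ ρ p (b i) = if i = i0 then lam else 0)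
    (hρb' : ∀ i, fderiv ℝ ρ p (b' i) = 0)
    (hRp : ∀ i, R i p = if i = i0 then (lam / 2 : ℂ) else 0)
    (hβ : ∀ j k, (1 / 2 * (fderiv ℝ (R j) p (b k) + I * fderiv ℝ (R j) p (b' k)) : ℂ) =
      if k = j then 1 else 0)
    (v : ι → ℂ) (hv : v i0 = 0) :
    ∃ (z : ℝ → ι → Wiener) (τ : ℝ → Wiener) (H : ℝ → ι → Wiener),
      (fun s : ℝ => z s - s • (fun i => v i • mono 1)) =o[𝓝 0] (fun s : ℝ => s) ∧
      ∀ᶠ s in 𝓝 (0 : ℝ), (∀ i, neg (z s i) = 0) ∧ neg (τ s) = 0 ∧ ‖τ s‖ ≤ 1 / 4 ∧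
        (∀ i, neg (H s i) = 0) ∧ ∀ (ζ : ℂ) (hζ : ‖ζ‖ = 1) (x : E),
          x = p + ∑ i, ((ev ζ hζ (z s i)).re • b i + (ev ζ hζ (z s i)).im • b' i) →
          ρ x = 0 ∧ ∀ i, ev ζ hζ (H s i) = ζ * (1 + 2 * (ev ζ hζ (τ s)).re : ℝ) * R i x := by
  have hρc : AnalyticAt ℝ (fun x => (ρ x : ℂ)) p :=
    (Complex.ofRealCLM.analyticAt _).comp hρ
  have hfd : ∀ w, fderiv ℝ (fun x => (ρ x : ℂ)) p w = (fderiv ℝ ρ p w : ℂ) := by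
    intro w
    have := (Complex.ofRealCLM.hasFDerivAt.comp p hρ.differentiableAt.hasFDerivAt).fderiv
    exact congrArg (fun f => f w) this
  obtain ⟨S, L, hS, hL, hS0, hSev⟩ := exists_subst hρc b b'
  choose SR LR hSR hLR hSR0 hSRev using fun i => exists_subst (hR i) b b'
  have hL' : ∀ z, L z = (lam / 2 : ℝ) • (z i0 + cj (z i0)) := by
    intro z
    rw [hL, Finset.sum_eq_single i0]
    · rw [hfd, hfd, hρb, hρb', if_pos rfl]
      simp only [← Complex.coe_smul]
      push_cast
      module
    · intro i _ hi
      rw [hfd, hfd, hρb, hρb', if_neg hi]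
      simp
    · simp
  have hLR' : ∀ j z, LR j z =
      (∑ k, (1 / 2 * (fderiv ℝ (R j) p (b k) - I * fderiv ℝ (R j) p (b' k)) : ℂ) • z k) +
        cj (z j) := by
    intro j z
    rw [hLR, Finset.sum_add_distrib]
    congr 1
    rw [Finset.sum_eq_single j]
    · rw [hβ, if_pos rfl, one_smul]
    · intro k _ hk
      rw [hβ, if_neg hk, zero_smul]
    · simp
  -- the maps entering the system, as functions of `t = (s, (x, σ))`
  let T := ℝ × ((ι → Wiener) × Wiener)
  let Z : T →L[ℝ] (ι → Wiener) := zmap i0 lam v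
  let X : ι → T →L[ℝ] Wiener := fun i =>
    (ContinuousLinearMap.proj (R := ℝ) (φ := fun _ : ι => Wiener) i).comp
        ((ContinuousLinearMap.fst ℝ (ι → Wiener) Wiener).comp
          (ContinuousLinearMap.snd ℝ ℝ ((ι → Wiener) × Wiener)))
  let sg : T →L[ℝ] Wiener := (ContinuousLinearMap.snd ℝ (ι → Wiener) Wiener).comp
          (ContinuousLinearMap.snd ℝ ℝ ((ι → Wiener) × Wiener))
  let ng : Wiener →L[ℝ] Wiener := neg.restrictScalars ℝ
  have hng : ∀ a, ng a = neg a := fun _ => rfl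
  let r : T → Wiener := fun t => avg (S (Z t))
  let P : T → Wiener := fun t => 1 + ((ng + refl).comp sg) t
  have hZ0 : Z 0 = 0 := map_zero _
  have hr : HasStrictFDerivAt r (avg.comp (L.comp Z)) 0 := by
    refine avg.hasStrictFDerivAt.comp (0 : T) ?_
    refine HasStrictFDerivAt.comp (0 : T) (f := Z) ?_ Z.hasStrictFDerivAt
    rwa [hZ0]
  have hr0 : r 0 = 0 := by simp [r, hZ0, hS0, hp]
  have hrd : ∀ t, avg (L (Z t)) = refl (X i0 t) + neg (X i0 t) + reC0 (X i0 t) := by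
    intro t
    rw [hL', ← avg_lin_rho]
    change avg ((lam / 2) • (zmap i0 lam v t i0 + cj (zmap i0 lam v t i0))) = _
    rw [zmap_self i0 lam v hv, lin_rho hlam]
    rfl
  have hQ : ∀ j, HasStrictFDerivAt (fun t => SR j (Z t)) ((LR j).comp Z) 0 := by
    intro j
    refine HasStrictFDerivAt.comp (0 : T) (f := Z) ?_ Z.hasStrictFDerivAt
    rw [hZ0]; exact hSR j
  have hP : HasStrictFDerivAt P ((ng + refl).comp sg) 0 :=
    ((ng + refl).comp sg).hasStrictFDerivAt.const_add 1
  have hP0 : P 0 = 1 := by simp [P]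
  have hPQ : ∀ j, HasStrictFDerivAt (fun t => P t * SR j (Z t))
      (P 0 • ((LR j).comp Z) + SR j (Z 0) • ((ng + refl).comp sg)) 0 := fun j => hP.mul (hQ j)
  have hLZ : ∀ j, ∀ t, neg (∑ k,
      (1 / 2 * (fderiv ℝ (R j) p (b k) - I * fderiv ℝ (R j) p (b' k)) : ℂ) • Z t k) = 0 := by
    intro j t
    rw [map_sum]
    refine Finset.sum_eq_zero fun k _ => ?_
    rw [map_smul, neg_zmap i0 lam v hv, smul_zero]
  -- the equation for the index `i0` and those for the other indices
  have hF : ∀ j, ∃ F : T → Wiener, HasStrictFDerivAt F (X j) 0 ∧ F 0 = 0 ∧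
      ∀ t, F t = 0 → if j = i0 then r t = 0 else neg (mono 1 * (P t * SR j (Z t))) = 0 := by
    intro j
    by_cases hj : j = i0
    · subst hj
      refine ⟨fun t => (ng + reC0) (r t) + (ContinuousLinearMap.id ℝ Wiener - ng - reC0) (X j t),
        ?_, ?_, ?_⟩
      · refine (((ng + reC0).hasStrictFDerivAt.comp (0 : T) hr).add
          ((ContinuousLinearMap.id ℝ Wiener - ng - reC0).comp
            (X j)).hasStrictFDerivAt).congr_fderiv ?_
        refine ContinuousLinearMap.ext fun t => ?_
        change neg (avg (L (Z t))) + reC0 (avg (L (Z t))) +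
          (X j t - neg (X j t) - reC0 (X j t)) = X j t
        rw [hrd]
        simp only [map_add, neg_refl, neg_neg_eq, neg_reC0, reC0_refl, reC0_neg, reC0_reC0]
        abel
      · simp [hr0]
      · intro t ht
        rw [if_pos rfl]
        change neg (r t) + reC0 (r t) + (X j t - neg (X j t) - reC0 (X j t)) = 0 at ht
        have h1 := congrArg neg ht
        simp only [map_add, map_sub, neg_neg_eq, neg_reC0, map_zero, sub_self, add_zero] at h1
        have h2 := congrArg reC0 ht
        simp only [map_add, map_sub, reC0_neg, reC0_reC0, map_zero, sub_self, add_zero, zero_add,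
          sub_zero] at h2
        exact avg_eq_zero h1 h2
    · refine ⟨fun t => (ng.comp (ContinuousLinearMap.mul ℝ Wiener (mono 1))) (P t * SR j (Z t)) +
        (ContinuousLinearMap.id ℝ Wiener - ng) (X j t), ?_, ?_, ?_⟩
      · refine (((ng.comp (ContinuousLinearMap.mul ℝ Wiener (mono 1))).hasStrictFDerivAt.comp
          (0 : T) (hPQ j)).add
          ((ContinuousLinearMap.id ℝ Wiener - ng).comp (X j)).hasStrictFDerivAt).congr_fderiv ?_
        refine ContinuousLinearMap.ext fun t => ?_
        change neg (mono 1 * (P 0 * LR j (Z t) + SR j (Z 0) * (neg (sg t) + refl (sg t)))) +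
          (X j t - neg (X j t)) = X j t
        rw [hP0, hZ0, hSR0, hRp, if_neg hj, zero_smul, zero_mul, add_zero, one_mul, hLR', mul_add,
          map_add, neg_mono_mul_of (hLZ j t), zero_add]
        change neg (mono 1 * cj (zmap i0 lam v t j)) + _ = _
        rw [zmap_ne i0 lam v hj, map_add, mul_add, map_add, neg_mul_cj_mul_refl, map_smul, cj_smul]
        have : neg (mono 1 * t.1 • (starRingEnd ℂ) (v j) • cj (mono 1)) = 0 := by
          rw [mul_smul_comm, mul_smul_comm, neg_real_smul, map_smul, neg_mul_cj_mono]
          simp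
        rw [this]
        change 0 + neg (X j t) + (X j t - neg (X j t)) = X j t
        abel
      · simp [hP0, hZ0, hSR0, hRp, hj]
      · intro t ht
        rw [if_neg hj]
        change neg (mono 1 * (P t * SR j (Z t))) + (X j t - neg (X j t)) = 0 at ht
        have h1 := congrArg neg ht
        simpa only [map_add, map_sub, neg_neg_eq, map_zero, sub_self, add_zero] using h1
  -- the equation which normalizes the weight
  have hF3 : ∃ F : T → Wiener, HasStrictFDerivAt F sg 0 ∧ F 0 = 0 ∧
      ∀ t, F t = 0 → r t = 0 → neg (P t * SR i0 (Z t)) = 0 := by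
    refine ⟨fun t => ((2 / lam) • ng) (P t * SR i0 (Z t) - (2 / lam) • r t) +
        (ContinuousLinearMap.id ℝ Wiener - ng) (sg t), ?_, ?_, ?_⟩
    · refine ((((2 / lam) • ng).hasStrictFDerivAt.comp (0 : T)
        ((hPQ i0).sub (hr.const_smul (2 / lam)))).add
          ((ContinuousLinearMap.id ℝ Wiener - ng).comp sg).hasStrictFDerivAt).congr_fderiv ?_
      refine ContinuousLinearMap.ext fun t => ?_
      change (2 / lam) • neg ((P 0 * LR i0 (Z t) + SR i0 (Z 0) * (neg (sg t) + refl (sg t))) -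
        (2 / lam) • avg (L (Z t))) + (sg t - neg (sg t)) = sg t
      rw [hP0, hZ0, hSR0, hRp, if_pos rfl, one_mul, hLR', hrd]
      simp only [map_sub, map_add, smul_mul_assoc, one_mul, map_smul, hLZ, neg_real_smul, neg_refl,
        neg_reC0, neg_neg_eq]
      have h2 : neg (cj (Z t i0)) = (2 / lam) • neg (X i0 t) := by
        change neg (cj (zmap i0 lam v t i0)) = _
        rw [zmap_self i0 lam v hv, cj.map_smul, map_add, cj.map_smul, cj_refl, cj_reC0,
          neg_real_smul, map_add, neg_real_smul, neg_reC0, neg_neg_eq, smul_zero, add_zero]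
        rfl
      rw [h2]
      have h3 : (lam / 2 : ℂ) • neg (sg t) = (lam / 2 : ℝ) • neg (sg t) := by
        rw [← Complex.coe_smul]; push_cast; rfl
      simp only [zero_add, add_zero, h3, add_sub_cancel_left, smul_smul]
      rw [show 2 / lam * (lam / 2) = 1 by field_simp]
      module
    · simp [hP0, hZ0, hSR0, hRp, hr0, hng, neg_one_eq]
    · intro t ht hrt
      change (2 / lam) • neg (P t * SR i0 (Z t) - (2 / lam) • r t) + (sg t - neg (sg t)) = 0 at ht
      rw [hrt, smul_zero, sub_zero] at ht
      have h1 := congrArg neg ht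
      simp only [map_add, map_sub, neg_neg_eq, map_zero, sub_self, add_zero, neg_real_smul] at h1
      exact (smul_eq_zero.1 h1).resolve_left (by positivity)
  choose F hFd hF0 hFz using hF
  obtain ⟨F3, hF3d, hF30, hF3z⟩ := hF3
  obtain ⟨Y, hY, hYo⟩ := exists_curve (Y := (ι → Wiener) × Wiener)
    (G := fun t => (fun j => F j t, F3 t))
    (((hasStrictFDerivAt_pi.2 hFd).prodMk hF3d).congr_fderiv (by ext <;> rfl))
    (by ext1 <;> simp [hF30, hF0]; rfl)
  have hY0 : Filter.Tendsto Y (𝓝 0) (𝓝 0) := hYo.isBigO.trans_tendsto Filter.tendsto_id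
  have ht0 : Filter.Tendsto (fun s => ((s, Y s) : T)) (𝓝 0) (𝓝 0) :=
    Filter.tendsto_id.prodMk_nhds hY0
  have hZt : Filter.Tendsto (fun s => Z (s, Y s)) (𝓝 0) (𝓝 0) := by
    have := (Z.continuous.tendsto 0).comp ht0
    rwa [hZ0] at this
  have hτ0 : Filter.Tendsto (fun s => refl (sg (s, Y s))) (𝓝 0) (𝓝 0) := by
    have := ((refl.comp sg).continuous.tendsto 0).comp ht0
    rwa [map_zero] at this
  have hτ : ∀ᶠ s in 𝓝 (0 : ℝ), ‖refl (sg (s, Y s))‖ < 1 / 4 :=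
    (hτ0.norm).eventually_lt_const (by simp)
  refine ⟨fun s => Z (s, Y s), fun s => refl (sg (s, Y s)),
    fun s i => mono 1 * (P (s, Y s) * SR i (Z (s, Y s))), ?_, ?_⟩
  · refine Asymptotics.IsBigO.trans_isLittleO ?_ hYo
    refine Asymptotics.IsBigO.of_bound ‖Z‖ (Filter.Eventually.of_forall fun s => ?_)
    have h1 : Z (s, Y s) - s • (fun i => v i • mono 1) = Z (0, Y s) := by
      rw [sub_eq_iff_eq_add, add_comm]
      exact zmap_split i0 lam v (s, Y s)
    rw [h1]
    refine (Z.le_opNorm _).trans_eq ?_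
    rw [Prod.norm_mk, norm_zero, max_eq_right (norm_nonneg _)]
  · filter_upwards [hY, hτ, hZt.eventually hSev,
      Filter.eventually_all.2 fun i => hZt.eventually (hSRev i)] with s hs hτs hS1 hS2
    have hFs : ∀ j, F j (s, Y s) = 0 := fun j => congrFun (congrArg Prod.fst hs) j
    have hF3s : F3 (s, Y s) = 0 := congrArg Prod.snd hs
    have hr0' : r (s, Y s) = 0 := by have := hFz i0 _ (hFs i0); rwa [if_pos rfl] at this
    refine ⟨fun i => neg_zmap i0 lam v hv _ i, neg_refl _, hτs.le, fun i => ?_,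
      fun ζ hζ x hx => ⟨?_, fun i => ?_⟩⟩
    · by_cases hi : i = i0
      · subst hi
        exact neg_mono_mul_of (hF3z _ hF3s hr0')
      · have := hFz i _ (hFs i)
        rwa [if_neg hi] at this
    · have h1 := hS1 ζ hζ
      rw [← hx] at h1
      have h2 := congrArg (ev ζ hζ) hr0'
      change ev ζ hζ ((1 / 2 : ℝ) • (S (Z (s, Y s)) + cj (S (Z (s, Y s))))) = _ at h2
      rw [(ev ζ hζ).map_smul_of_tower, map_add, ev_cj, h1, conj_ofReal, map_zero] at h2
      have h3 : (ρ x : ℂ) = 0 := by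
        rw [← h2, Complex.real_smul]; push_cast; ring
      exact_mod_cast h3
    · have h1 := hS2 i ζ hζ
      rw [← hx] at h1
      have h2 : ev ζ hζ (P (s, Y s)) = (1 + 2 * (ev ζ hζ (refl (sg (s, Y s)))).re : ℝ) := by
        change ev ζ hζ (1 + (neg (sg (s, Y s)) + refl (sg (s, Y s)))) = _
        rw [← cj_refl, map_add, map_add, ev_cj, ev_one, add_comm (starRingEnd ℂ _),
          Complex.add_conj]
        push_cast; ring
      rw [ev_mul, ev_mul, ev_mono, h1, h2, zpow_one, mul_assoc]

end discs
end Wiener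

/-! ### The operators ∂ and ∂̄, and the Levi form -/

open scoped Classical in
/-- A basis, orthonormal for a given inner product, all of whose vectors but one lie in the kernel
of a given linear form. -/
theorem exists_adapted_basis {V : Type*} [AddCommGroup V] [Module ℂ V] [FiniteDimensional ℂ V]
    (c : InnerProductSpace.Core ℂ V) (l : V →ₗ[ℂ] ℂ) (hl : l ≠ 0) :
    ∃ (u : Finset V) (b : Module.Basis u ℂ V) (i0 : u) (lam : ℝ), 0 < lam ∧
      (∀ i, l (b i) = if i = i0 then (lam : ℂ) else 0) ∧
      ∀ j k, c.inner (b k) (b j) = if k = j then 1 else 0 := by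
  let _ : NormedAddCommGroup V := c.toNormedAddCommGroup
  let _ : InnerProductSpace ℂ V := InnerProductSpace.ofCore c.toCore
  have : CompleteSpace V := FiniteDimensional.complete ℂ V
  set w : V := (InnerProductSpace.toDual ℂ V).symm (LinearMap.toContinuousLinearMap l) with hw
  have hlw : ∀ v, l v = inner ℂ w v := fun v => by
    rw [hw, InnerProductSpace.toDual_symm_apply]; rfl
  have hw0 : w ≠ 0 := by
    intro h
    apply hl
    ext v
    rw [hlw, h, inner_zero_left]; rfl
  have hnw : 0 < ‖w‖ := norm_pos_iff.2 hw0
  set e : V := ((‖w‖⁻¹ : ℝ) : ℂ) • w with he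
  have hne : ‖e‖ = 1 := by
    rw [he, norm_smul, Complex.norm_real, norm_inv, norm_norm, inv_mul_cancel₀ hnw.ne']
  have hwe : w = ((‖w‖ : ℝ) : ℂ) • e := by
    rw [he, smul_smul, ← ofReal_mul, mul_inv_cancel₀ hnw.ne', ofReal_one, one_smul]
  have horth : Orthonormal ℂ ((↑) : ({e} : Set V) → V) := by
    constructor
    · rintro ⟨x, rfl⟩; exact hne
    · rintro ⟨x, rfl⟩ ⟨y, rfl⟩ h; exact absurd rfl h
  obtain ⟨u, b, hu, hb⟩ := horth.exists_orthonormalBasis_extension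
  have hbu : ∀ i, b i = (i : V) := fun i => congrFun hb i
  have heu : e ∈ u := hu rfl
  have hbo := orthonormal_iff_ite.1 b.orthonormal
  refine ⟨u, b.toBasis, ⟨e, heu⟩, ‖w‖, hnw, fun i => ?_, fun j k => ?_⟩
  · rw [OrthonormalBasis.coe_toBasis, hlw, hwe, inner_smul_left, conj_ofReal]
    have h1 : (inner ℂ e (b i) : ℂ) = inner ℂ (b ⟨e, heu⟩) (b i) := by rw [hbu ⟨e, heu⟩]
    rw [h1, hbo, ← hwe]
    by_cases hi : i = ⟨e, heu⟩
    · simp [hi]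
    · rw [if_neg hi, if_neg (Ne.symm hi), mul_zero]
  · rw [OrthonormalBasis.coe_toBasis]
    exact hbo k j

section
variable {E : Type*} [NormedAddCommGroup E] [NormedSpace ℂ E]

/-- The derivative `∂ρ_x(v) = ∑ (∂ρ/∂z_j)(x) v_j` of a real function. -/
noncomputable def dz (ρ : E → ℝ) (x v : E) : ℂ :=
  (1 / 2 : ℂ) * ((fderiv ℝ ρ x v : ℂ) - I * (fderiv ℝ ρ x (I • v) : ℂ))

/-- The derivative `∂̄f_x(v) = ∑ (∂f/∂z̄_j)(x) conj(v_j)` of a complex function. -/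
noncomputable def dbar (f : E → ℂ) (x v : E) : ℂ :=
  (1 / 2 : ℂ) * (fderiv ℝ f x v + I * fderiv ℝ f x (I • v))

lemma I_smul_I_smul (v : E) : I • I • v = -v := by rw [smul_smul, I_mul_I, neg_one_smul]

lemma smul_eq_re_im (c : ℂ) (v : E) : c • v = c.re • v + c.im • I • v := by
  conv_lhs => rw [← re_add_im c]
  rw [add_smul, mul_smul, Complex.coe_smul, Complex.coe_smul]

/-- `∂ρ_x` as a complex linear form. -/
noncomputable def dzLin (ρ : E → ℝ) (x : E) : E →ₗ[ℂ] ℂ where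
  toFun := dz ρ x
  map_add' u v := by simp only [dz, smul_add, map_add, ofReal_add]; ring
  map_smul' c v := by
    have h1 : I • c • v = c.re • I • v - c.im • v := by
      rw [smul_comm, smul_eq_re_im c (I • v), I_smul_I_smul, smul_neg, sub_eq_add_neg]
    simp only [dz, h1]
    rw [smul_eq_re_im c v]
    simp only [map_add, map_sub, map_smul, smul_eq_mul, RingHom.id_apply, ofReal_add, ofReal_sub,
      ofReal_mul]
    conv_rhs => rw [← re_add_im c]
    linear_combination (1 / 2 : ℂ) * (c.im) * (fderiv ℝ ρ x (I • v) : ℂ) * I_sq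

lemma dzLin_apply (ρ : E → ℝ) (x v : E) : dzLin ρ x v = dz ρ x v := rfl

lemma fderiv_eq_re_dz (ρ : E → ℝ) (x v : E) : fderiv ℝ ρ x v = 2 * (dz ρ x v).re := by
  simp [dz]

lemma fderiv_I_eq (ρ : E → ℝ) (x v : E) : fderiv ℝ ρ x (I • v) = -2 * (dz ρ x v).im := by
  simp [dz]

lemma dzLin_ne_zero {ρ : E → ℝ} {x : E} (h : fderiv ℝ ρ x ≠ 0) : dzLin ρ x ≠ 0 := by
  contrapose! h
  ext v
  rw [fderiv_eq_re_dz, ← dzLin_apply, h]; simp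

/-- The Levi form attached to a positive definite real symmetric form, an inner product on the whole
space and not only on the complex tangent space. -/
@[reducible] noncomputable def leviCore (B : E →L[ℝ] E →L[ℝ] ℝ) (hsymm : ∀ u v, B u v = B v u)
    (hpos : ∀ v, v ≠ 0 → 0 < B v v) : InnerProductSpace.Core ℂ E where
  inner x y := (1 / 4 : ℂ) * (B x y + B (I • x) (I • y) + I * (B (I • x) y - B x (I • y)))
  conj_inner_symm x y := by
    simp only [map_mul, map_add, map_sub, conj_ofReal, conj_I, map_div₀, map_one, map_ofNat]
    rw [hsymm y x, hsymm (I • y) (I • x), hsymm (I • y) x, hsymm y (I • x)]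
    ring
  re_inner_nonneg x := by
    have h : ∀ v, 0 ≤ B v v := fun v => by
      by_cases hv : v = 0
      · simp [hv]
      · exact (hpos v hv).le
    have h1 := h x
    have h2 := h (I • x)
    rw [hsymm (I • x) x, sub_self, mul_zero, add_zero, ← ofReal_add]
    rw [show (1 / 4 : ℂ) = ((1 / 4 : ℝ) : ℂ) by push_cast; rfl, ← ofReal_mul]
    change 0 ≤ (((1 / 4 * (B x x + B (I • x) (I • x)) : ℝ)) : ℂ).re
    rw [ofReal_re]
    positivity
  add_left x y z := by
    simp only [smul_add, map_add, add_apply, ofReal_add]; ring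
  smul_left x y c := by
    have h1 : I • c • x = c.re • I • x - c.im • x := by
      rw [smul_comm, smul_eq_re_im c (I • x), I_smul_I_smul, smul_neg, sub_eq_add_neg]
    simp only [h1]
    rw [smul_eq_re_im c x]
    simp only [map_add, map_sub, map_smul, add_apply, sub_apply,
      smul_apply, smul_eq_mul, ofReal_add, ofReal_sub, ofReal_mul]
    have : (starRingEnd ℂ) c = c.re - c.im * I := by
      apply Complex.ext <;> simp
    rw [this]
    linear_combination (1 / 4 : ℂ) * c.im * (B (I • x) y - B x (I • y) : ℂ) * I_sq
  definite x hx := by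
    by_contra h0
    have h1 := hpos x h0
    have h2 : 0 < B (I • x) (I • x) := hpos _ (by simpa using h0)
    have hx' : (1 / 4 : ℂ) * (B x x + B (I • x) (I • x) + I * (B (I • x) x - B x (I • x))) = 0 := hx
    rw [hsymm (I • x) x, sub_self, mul_zero, add_zero, ← ofReal_add] at hx'
    have h3 : (B x x + B (I • x) (I • x) : ℝ) = 0 := by
      have := (mul_eq_zero.1 hx').resolve_left (by norm_num)
      exact_mod_cast this
    linarith

open scoped Classical in
/-- A basis which is orthonormal for the Levi form at `p` and adapted to the complex tangent space.
The positive real Hessian makes the Levi form positive definite. -/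
theorem exists_levi_basis [FiniteDimensional ℂ E] {ρ : E → ℝ} {p : E} (hρ : ContDiffAt ℝ 2 ρ p)
    (hgrad : fderiv ℝ ρ p ≠ 0)
    (hhess : ∀ v : E, v ≠ 0 → 0 < iteratedFDeriv ℝ 2 ρ p ![v, v]) :
    ∃ (u : Finset E) (b : Module.Basis u ℂ E) (i0 : u) (lam : ℝ), 0 < lam ∧
      (∀ i, dz ρ p (b i) = if i = i0 then (lam / 2 : ℂ) else 0) ∧
      ∀ j k, (1 / 2 * (fderiv ℝ (fun x => dz ρ x (b j)) p (b k) +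
        I * fderiv ℝ (fun x => dz ρ x (b j)) p (I • b k)) : ℂ) = if k = j then 1 else 0 := by
  set B := fderiv ℝ (fderiv ℝ ρ) p with hB
  have hd : DifferentiableAt ℝ (fderiv ℝ ρ) p :=
    (hρ.fderiv_right (m := 1) (by norm_num)).differentiableAt (by norm_num)
  have hsymm : ∀ u v, B u v = B v u := by
    have := hρ.isSymmSndFDerivAt (by simp)
    exact fun u v => this u v
  have hpos : ∀ v, v ≠ 0 → 0 < B v v := by
    intro v hv
    have := hhess v hv
    rw [iteratedFDeriv_two_apply] at this
    simpa using this
  obtain ⟨u, b, i0, lam, hlam, h1, h2⟩ := exists_adapted_basis (leviCore B hsymm hpos)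
    (dzLin ρ p) (dzLin_ne_zero hgrad)
  refine ⟨u, b, i0, 2 * lam, by positivity, fun i => ?_, fun j k => ?_⟩
  · rw [← dzLin_apply, h1]; split_ifs <;> simp
  · rw [← h2 j k]
    have hder : ∀ v w, fderiv ℝ (fun x => dz ρ x v) p w =
        (1 / 2 : ℂ) * ((B w v : ℂ) - I * (B w (I • v) : ℂ)) := by
      intro v w
      have hev : ∀ v, HasFDerivAt (fun x => (fderiv ℝ ρ x v : ℂ))
          (ofRealCLM.comp ((ContinuousLinearMap.apply ℝ ℝ v).comp B)) p := fun v =>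
        ofRealCLM.hasFDerivAt.comp p
          ((ContinuousLinearMap.apply ℝ ℝ v).hasFDerivAt.comp p hd.hasFDerivAt)
      have := (((hev v).sub ((hev (I • v)).const_mul I)).const_mul (1 / 2 : ℂ)).fderiv
      exact congrArg (fun f => f w) this
    rw [hder, hder]
    change _ = (1 / 4 : ℂ) * (B (b k) (b j) + B (I • b k) (I • b j) +
      I * (B (I • b k) (b j) - B (b k) (I • b j)))
    linear_combination (-1 / 4 : ℂ) * (B (I • b k) (I • b j) : ℂ) * I_sq

end

/-! ### The moment condition along small discs -/

section
variable {E : Type*} [NormedAddCommGroup E] [NormedSpace ℂ E]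

lemma fderiv_smul_eq (f : E → ℂ) (p v : E) (ζ : ℂ) : fderiv ℝ f p (ζ • v) =
    ζ * (1 / 2 * (fderiv ℝ f p v - I * fderiv ℝ f p (I • v))) + (starRingEnd ℂ) ζ * dbar f p v := by
  rw [smul_eq_re_im, map_add, map_smul, map_smul, dbar]
  have h1 : (starRingEnd ℂ) ζ = ζ.re - ζ.im * I := by apply Complex.ext <;> simp
  rw [h1]
  conv_rhs => rw [← re_add_im ζ]
  simp only [Complex.real_smul, add_re, ofReal_re, mul_re, I_re, mul_zero, ofReal_im, I_im, mul_one,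
    sub_self, add_zero, add_im, mul_im, zero_add]
  linear_combination (ζ.im * fderiv ℝ f p (I • v) : ℂ) * I_sq

/-- Infinitesimal form of the moment condition `∮ f(A_s(ζ)) dζ = 0` along discs
`A_s(ζ) = p + s ζ v + o(s)`. -/
theorem dbar_eq_zero_of_discs {f : E → ℂ} {p v : E} (hf : DifferentiableAt ℝ f p)
    (A : ℝ → ℂ → E)
    (hA : ∀ᶠ s in 𝓝[>] (0 : ℝ), ∃ g : ℂ → ℂ, ContinuousOn g (closedBall 0 1) ∧
      DifferentiableOn ℂ g (ball 0 1) ∧ ∀ ζ ∈ sphere (0 : ℂ) 1, g ζ = f (A s ζ))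
    (hexp : ∀ ε > 0, ∀ᶠ s in 𝓝[>] (0 : ℝ), ∀ ζ ∈ sphere (0 : ℂ) 1,
      ‖A s ζ - p - s • ζ • v‖ ≤ ε * s) :
    dbar f p v = 0 := by
  -- on the circle `f (A_s ζ) = f p + s L ζ + s M ζ⁻¹ + o(s)`, and its integral is `2 π i s M + o(s)`
  set M := dbar f p v with hM
  set T := fderiv ℝ f p with hT
  set K : ℝ := ‖v‖ + 1 + ‖T‖ with hK
  have hKpos : 0 < K := by positivity
  have key : ∀ ε > 0, ε ≤ 1 → ‖M‖ ≤ ε * K := by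
    intro ε hε hε1
    have hlo := hf.hasFDerivAt.isLittleO.def hε
    obtain ⟨δ, hδ, hball⟩ := Metric.eventually_nhds_iff.1 hlo
    have hsmall : ∀ᶠ s in 𝓝[>] (0 : ℝ), s * (‖v‖ + 1) < δ := by
      have : Filter.Tendsto (fun s : ℝ => s * (‖v‖ + 1)) (𝓝 0) (𝓝 (0 * (‖v‖ + 1))) :=
        (continuous_id.mul continuous_const).tendsto 0
      rw [zero_mul] at this
      exact (this.mono_left nhdsWithin_le_nhds).eventually_lt_const hδ
    obtain ⟨s, ⟨g, hgc, hgd, hg⟩, hs, hsδ, hs0⟩ :=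
      (hA.and ((hexp ε hε).and (hsmall.and self_mem_nhdsWithin))).exists
    have hs0 : 0 < s := hs0
    set Lf : ℂ := 1 / 2 * (T v - I * T (I • v)) with hLf
    set φ : ℂ → ℂ := fun ζ => f p + s * (ζ * Lf) + s * M * (ζ - 0)⁻¹ with hφ
    have hest : ∀ ζ ∈ sphere (0 : ℂ) 1, ‖g ζ - φ ζ‖ ≤ ε * K * s := by
      intro ζ hζ
      have hζ1 : ‖ζ‖ = 1 := by simpa using hζ
      have hk := hs ζ hζ
      set k := A s ζ - p - s • ζ • v with hkdef
      have hh : A s ζ - p = s • ζ • v + k := by rw [hkdef]; abel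
      have hsv : ‖s • ζ • v‖ = s * ‖v‖ := by
        rw [norm_smul, norm_smul, hζ1, one_mul, Real.norm_of_nonneg hs0.le]
      have hnorm : ‖A s ζ - p‖ ≤ s * (‖v‖ + 1) := by
        rw [hh]
        refine (norm_add_le _ _).trans ?_
        rw [hsv]
        nlinarith
      have h1 := hball (y := A s ζ) (by rw [dist_eq_norm]; exact hnorm.trans_lt hsδ)
      have hconj : (starRingEnd ℂ) ζ = (ζ - 0)⁻¹ := by
        rw [sub_zero, Complex.inv_def, Complex.normSq_eq_norm_sq, hζ1]; simp
      have h2 : g ζ - φ ζ = (f (A s ζ) - f p - T (A s ζ - p)) + T k := by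
        rw [hg ζ hζ, hh, map_add, map_smul, fderiv_smul_eq, hconj, hφ, Complex.real_smul]
        ring
      rw [h2]
      calc _ ≤ ‖f (A s ζ) - f p - T (A s ζ - p)‖ + ‖T k‖ := norm_add_le _ _
        _ ≤ ε * (s * (‖v‖ + 1)) + ‖T‖ * (ε * s) := by
          refine add_le_add (h1.trans ?_) ((T.le_opNorm k).trans ?_)
          · exact mul_le_mul_of_nonneg_left hnorm hε.le
          · exact mul_le_mul_of_nonneg_left hk (norm_nonneg _)
        _ = ε * K * s := by rw [hK]; ring
    have hint := circleIntegral.norm_integral_le_of_norm_le_const (zero_le_one' ℝ) hest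
    have hne : ∀ ζ ∈ sphere (0 : ℂ) 1, ζ - 0 ≠ 0 := by
      rintro ζ hζ h
      rw [sub_zero] at h
      simp [h] at hζ
    have hgi : CircleIntegrable g 0 1 :=
      (hgc.mono sphere_subset_closedBall).circleIntegrable zero_le_one
    have hc1 : ContinuousOn (fun ζ : ℂ => f p + s * (ζ * Lf)) (sphere (0 : ℂ) 1) := by fun_prop
    have hc2 : ContinuousOn (fun ζ : ℂ => s * M * (ζ - 0)⁻¹) (sphere (0 : ℂ) 1) :=
      continuousOn_const.mul ((continuousOn_id.sub continuousOn_const).inv₀ hne)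
    have hφi : CircleIntegrable φ 0 1 := (hc1.add hc2).circleIntegrable zero_le_one
    rw [circleIntegral.integral_sub hgi hφi] at hint
    have hg0 : (∮ ζ in C(0, 1), g ζ) = 0 :=
      Complex.circleIntegral_eq_zero_of_differentiable_on_off_countable zero_le_one
        Set.countable_empty hgc fun ζ hζ =>
          (hgd ζ hζ.1).differentiableAt (isOpen_ball.mem_nhds hζ.1)
    have hφ0 : (∮ ζ in C(0, 1), φ ζ) = s * M * (2 * Real.pi * I) := by
      rw [hφ, circleIntegral.integral_add (hc1.circleIntegrable zero_le_one)
        (hc2.circleIntegrable zero_le_one)]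
      have h1 : (∮ ζ in C(0, 1), (f p + s * (ζ * Lf))) = 0 :=
        Complex.circleIntegral_eq_zero_of_differentiable_on_off_countable zero_le_one
          Set.countable_empty (by fun_prop) fun ζ hζ => by fun_prop
      have h2 : (∮ ζ in C(0, 1), s * M * (ζ - 0)⁻¹) = s * M * (2 * Real.pi * I) := by
        rw [circleIntegral.integral_const_mul, circleIntegral.integral_sub_center_inv 0 one_ne_zero]
      rw [h1, h2, zero_add]
    rw [hg0, hφ0, zero_sub, norm_neg, norm_mul, norm_mul, norm_mul, norm_mul, norm_I, Complex.norm_real,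
      Complex.norm_real, Real.norm_of_nonneg hs0.le, Real.norm_of_nonneg Real.pi_pos.le] at hint
    simp only [Complex.norm_ofNat, mul_one] at hint
    have h3 : 0 < 2 * Real.pi * s := by positivity
    have h4 : (2 * Real.pi * s) * ‖M‖ ≤ (2 * Real.pi * s) * (ε * K) := by linarith
    exact le_of_mul_le_mul_left h4 h3
  by_contra hne
  have hMpos : 0 < ‖M‖ := norm_pos_iff.2 hne
  have h1 := key (min 1 (‖M‖ / (2 * K))) (lt_min one_pos (by positivity)) (min_le_left _ _)
  have h2 : min 1 (‖M‖ / (2 * K)) * K ≤ ‖M‖ / (2 * K) * K :=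
    mul_le_mul_of_nonneg_right (min_le_right _ _) hKpos.le
  have h3 : ‖M‖ / (2 * K) * K = ‖M‖ / 2 := by field_simp
  linarith

end

/-! ### Stationary discs of the domain -/

section domain
variable {E : Type*} [NormedAddCommGroup E] {D U : Set E} {ρ : E → ℝ}

lemma rho_eq_zero (hD : IsOpen D) (hU : IsOpen U) (hfrU : frontier D ⊆ U) (hρ : ContinuousOn ρ U)
    (hρD : D ∩ U = {z | z ∈ U ∧ ρ z < 0}) {p : E} (hp : p ∈ frontier D) : ρ p = 0 := by
  have hpU := hfrU hp
  have hc : ContinuousAt ρ p := hρ.continuousAt (hU.mem_nhds hpU)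
  refine le_antisymm ?_ (le_of_not_gt fun h => ?_)
  · by_contra h
    have h1 : ∀ᶠ y in 𝓝 p, 0 < ρ y := hc.eventually_const_lt (not_le.1 h)
    have h2 : ∀ᶠ y in 𝓝 p, y ∈ U := hU.mem_nhds hpU
    obtain ⟨y, hy, hyD⟩ := mem_closure_iff_nhds.1 (frontier_subset_closure hp) _ (h1.and h2)
    have : y ∈ D ∩ U := ⟨hyD, hy.2⟩
    rw [hρD] at this
    exact lt_asymm hy.1 this.2
  · have : p ∈ D ∩ U := by rw [hρD]; exact ⟨hpU, h⟩
    have h3 := hp.2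
    rw [hD.interior_eq] at h3
    exact h3 this.1

lemma mem_frontier_of_rho_eq_zero [NormedSpace ℝ E] (hD : IsOpen D) (hU : IsOpen U)
    (hρD : D ∩ U = {z | z ∈ U ∧ ρ z < 0}) {x : E} (hx : x ∈ U) (h0 : ρ x = 0)
    (hgrad : fderiv ℝ ρ x ≠ 0) : x ∈ frontier D := by
  rw [hD.frontier_eq]
  refine ⟨?_, fun h => ?_⟩
  · by_contra hcl
    refine hgrad (IsLocalMin.fderiv_eq_zero ?_)
    have h1 : ∀ᶠ y in 𝓝 x, y ∈ (closure D)ᶜ := isClosed_closure.isOpen_compl.mem_nhds hcl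
    filter_upwards [h1, hU.mem_nhds hx] with y hy hyU
    rw [h0]
    by_contra hneg
    have : y ∈ D ∩ U := by rw [hρD]; exact ⟨hyU, not_le.1 hneg⟩
    exact hy (subset_closure this.1)
  · have : x ∈ D ∩ U := ⟨h, hx⟩
    rw [hρD] at this
    exact absurd this.2 (by rw [h0]; exact lt_irrefl 0)

end domain

/-- Maximum principle: a holomorphic disc with boundary in a closed convex set lies in it. -/
lemma disc_mem_of_convex {E : Type*} [NormedAddCommGroup E] [NormedSpace ℂ E] {K : Set E}
    (hK : Convex ℝ K) (hKc : IsClosed K) {A : ℂ → E} (hAc : ContinuousOn A (closedBall 0 1))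
    (hAd : DifferentiableOn ℂ A (ball 0 1)) (hA : ∀ ζ ∈ sphere (0 : ℂ) 1, A ζ ∈ K) :
    ∀ ζ ∈ closedBall (0 : ℂ) 1, A ζ ∈ K := by
  intro ζ hζ
  by_contra hcon
  obtain ⟨l, u, h1, h2⟩ := RCLike.geometric_hahn_banach_closed_point (𝕜 := ℂ) hK hKc hcon
  have hd : DiffContOnCl ℂ (fun ξ => Complex.exp (l (A ξ))) (ball 0 1) := by
    refine ⟨?_, ?_⟩
    · exact (l.differentiable.comp_differentiableOn hAd).cexp
    · rw [closure_ball _ one_ne_zero]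
      exact (l.continuous.comp_continuousOn hAc).cexp
  have hb := Complex.norm_le_of_forall_mem_frontier_norm_le (C := Real.exp u) isBounded_ball hd
    (fun ξ hξ => by
      rw [frontier_ball _ one_ne_zero] at hξ
      rw [Complex.norm_exp]
      exact Real.exp_le_exp.2 (h1 _ (hA ξ hξ)).le) (z := ζ)
    (by rwa [closure_ball _ one_ne_zero])
  rw [Complex.norm_exp] at hb
  exact absurd (Real.exp_le_exp.1 hb) (not_le.2 h2)

/-- The space `ℂⁿ`. -/
abbrev Cn (n : ℕ) : Type := EuclideanSpace ℂ (Fin n)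

section
variable {n : ℕ}

lemma wirtinger_eq_dz (ρ : Cn n → ℝ) (x : Cn n) (j : Fin n) :
    wirtinger ρ x j = dz ρ x (EuclideanSpace.single j 1) := by
  have : EuclideanSpace.single j I = I • (EuclideanSpace.single j 1 : Cn n) := by
    ext k
    by_cases h : k = j <;> simp [h]
  rw [wirtinger, dz, this]

open Wiener in
/-- The disc with components `hol (z i)` in the basis `b`, based at `p`. -/
noncomputable def discOf {ι : Type*} [Fintype ι] (p : Cn n) (b : ι → Cn n) (z : ι → Wiener)
    (ζ : ℂ) : Cn n :=
  p + ∑ i, hol (z i) ζ • b i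

open Wiener in
/-- The output of `exists_small_discs` is a stationary disc. The closed disc stays in the closure of
`D` by convexity, so only the boundary values have to be controlled. -/
theorem isStationaryDisc_discOf {D U : Set (Cn n)} {ρ : Cn n → ℝ} (hD : IsOpen D) (hconv : Convex ℝ D)
    (hU : IsOpen U) (hρD : D ∩ U = {z | z ∈ U ∧ ρ z < 0}) {ι : Type*} [Fintype ι] {p : Cn n}
    (b : Module.Basis ι ℂ (Cn n)) {z H : ι → Wiener} {τ : Wiener}
    (hτ : neg τ = 0) (hτn : ‖τ‖ ≤ 1 / 4) (hH : ∀ i, neg (H i) = 0)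
    (hnear : ∀ ζ ∈ sphere (0 : ℂ) 1, discOf p b z ζ ∈ U ∧ fderiv ℝ ρ (discOf p b z ζ) ≠ 0)
    (hnc : discOf p b z 1 ≠ discOf p b z (-1))
    (hmain : ∀ (ζ : ℂ) (hζ : ‖ζ‖ = 1), ρ (discOf p b z ζ) = 0 ∧
      ∀ i, ev ζ hζ (H i) = ζ * (1 + 2 * (ev ζ hζ τ).re : ℝ) * dz ρ (discOf p b z ζ) (b i)) :
    IsStationaryDisc ρ D (discOf p b z) := by
  have hAc : ContinuousOn (discOf p b z) (closedBall 0 1) :=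
    continuousOn_const.add (continuousOn_finsetSum _ fun i _ =>
      (continuousOn_hol (z i)).smul continuousOn_const)
  have hAd : DifferentiableOn ℂ (discOf p b z) (ball 0 1) := by
    refine DifferentiableOn.const_add _ (DifferentiableOn.fun_sum fun i _ => ?_)
    exact (differentiableOn_hol (z i)).smul_const (b i)
  have hfr : ∀ ζ ∈ sphere (0 : ℂ) 1, discOf p b z ζ ∈ frontier D := by
    intro ζ hζ
    have hζ1 : ‖ζ‖ = 1 := by simpa using hζ
    exact mem_frontier_of_rho_eq_zero hD hU hρD (hnear ζ hζ).1 (hmain ζ hζ1).1 (hnear ζ hζ).2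
  refine ⟨hAc, hAd, ?_, ?_, hfr, fun ζ => 1 + 2 * (hol τ ζ).re, ?_, ?_,
    fun ζ => ∑ i, hol (H i) ζ •
      (WithLp.toLp 2 fun j => b.repr (EuclideanSpace.single j 1) i : Cn n), ?_, ?_, ?_⟩
  · rintro ⟨c, hc⟩
    exact hnc ((hc 1 (by simp)).trans (hc (-1) (by simp)).symm)
  · exact disc_mem_of_convex hconv.closure isClosed_closure hAc hAd
      fun ζ hζ => frontier_subset_closure (hfr ζ hζ)
  · have := (continuousOn_hol τ).mono (sphere_subset_closedBall (x := (0 : ℂ)) (ε := 1))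
    exact continuousOn_const.add
      (continuousOn_const.mul (Complex.continuous_re.comp_continuousOn this))
  · intro ζ hζ
    have hζ1 : ‖ζ‖ = 1 := by simpa using hζ
    have h1 : |(hol τ ζ).re| ≤ 1 / 4 := (Complex.abs_re_le_norm (hol τ ζ)).trans
      (by rw [hol_eq_ev τ hτ ζ hζ1]; exact (norm_ev_le ζ hζ1 τ).trans hτn)
    have := (abs_le.1 h1).1
    change 0 < 1 + 2 * (hol τ ζ).re
    linarith
  · exact continuousOn_finsetSum _ fun i _ => (continuousOn_hol (H i)).smul continuousOn_const
  · exact DifferentiableOn.fun_sum fun i _ => (differentiableOn_hol (H i)).smul_const _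
  · intro ζ hζ j
    have hζ1 : ‖ζ‖ = 1 := by simpa using hζ
    rw [wirtinger_eq_dz, ← dzLin_apply]
    conv_rhs => rw [← b.sum_repr (EuclideanSpace.single j 1)]
    rw [map_sum, Finset.mul_sum, WithLp.ofLp_sum, Finset.sum_apply]
    refine Finset.sum_congr rfl fun i _ => ?_
    rw [map_smul, dzLin_apply, PiLp.smul_apply, smul_eq_mul, smul_eq_mul, hol_eq_ev _ (hH i) ζ hζ1,
      (hmain ζ hζ1).2 i, ← hol_eq_ev τ hτ ζ hζ1]
    push_cast
    ring

end

/-! ### The tangential Cauchy–Riemann equations -/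

section
variable {n : ℕ}

open Wiener in
lemma discOf_sub {ι : Type*} [Fintype ι] (p : Cn n) (b : ι → Cn n) {z : ι → Wiener}
    (hz : ∀ i, neg (z i) = 0) (v : ι → ℂ) (s : ℝ) {ζ : ℂ} (hζ : ‖ζ‖ = 1) :
    ‖discOf p b z ζ - p - s • ζ • ∑ i, v i • b i‖ ≤
      ‖z - s • (fun i => v i • mono 1)‖ * ∑ i, ‖b i‖ := by
  have : discOf p b z ζ - p - s • ζ • ∑ i, v i • b i =
      ∑ i, ev ζ hζ ((z - s • (fun i => v i • mono 1)) i) • b i := by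
    rw [discOf, add_sub_cancel_left, Finset.smul_sum, Finset.smul_sum, ← Finset.sum_sub_distrib]
    refine Finset.sum_congr rfl fun i _ => ?_
    rw [hol_eq_ev _ (hz i) ζ hζ, Pi.sub_apply, Pi.smul_apply, map_sub, sub_smul]
    congr 1
    rw [← Complex.coe_smul s (v i • mono 1), map_smul, map_smul, ev_mono, ← Complex.coe_smul s,
      smul_smul, smul_smul, zpow_one, smul_eq_mul, smul_eq_mul]
    congr 1
    ring
  rw [this, Finset.mul_sum]
  refine norm_sum_le_of_le _ fun i _ => ?_
  rw [norm_smul]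
  gcongr
  exact (norm_ev_le _ _ _).trans (norm_le_pi_norm _ i)

open Wiener in
open scoped Classical in
/-- A function which extends along the small stationary discs near `p` satisfies the tangential
Cauchy–Riemann equations at `p`. -/
theorem dbar_eq_zero_of_stationary {D U : Set (Cn n)} {ρ : Cn n → ℝ} (hD : IsOpen D)
    (hconv : Convex ℝ D) (hU : IsOpen U) (hfrU : frontier D ⊆ U) (hρ : AnalyticOnNhd ℝ ρ U)
    (hρD : D ∩ U = {z | z ∈ U ∧ ρ z < 0}) {f : Cn n → ℂ}
    (hext : ∀ A : ℂ → Cn n, IsStationaryDisc ρ D A → ExtendsAlong f A) {p : Cn n}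
    (hp : p ∈ frontier D) (hgrad : fderiv ℝ ρ p ≠ 0)
    (hhess : ∀ v : Cn n, v ≠ 0 → 0 < iteratedFDeriv ℝ 2 ρ p ![v, v])
    (hf : DifferentiableAt ℝ f p) {v : Cn n} (hv : dz ρ p v = 0) : dbar f p v = 0 := by
  rcases eq_or_ne v 0 with rfl | hv0
  · simp [dbar]
  have hpU := hfrU hp
  have hρp : ρ p = 0 := rho_eq_zero hD hU hfrU hρ.continuousOn hρD hp
  obtain ⟨u, b, i0, lam, hlam, hb1, hb2⟩ :=
    exists_levi_basis ((hρ p hpU).contDiffAt) hgrad hhess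
  have hvb : ∑ i, b.repr v i • b i = v := b.sum_repr v
  have hvi0 : b.repr v i0 = 0 := by
    rw [← dzLin_apply, ← hvb, map_sum] at hv
    simp only [map_smul, dzLin_apply, hb1, smul_eq_mul, mul_ite, mul_zero, Finset.sum_ite_eq',
      Finset.mem_univ, if_true] at hv
    have : (lam / 2 : ℂ) ≠ 0 := by
      have := hlam.ne'
      simp [this]
    exact (mul_eq_zero.1 hv).resolve_right this
  have hR : ∀ i, AnalyticAt ℝ (fun x => dz ρ x (b i)) p := by
    intro i
    have h1 := (hρ p hpU).fderiv
    have h2 : ∀ w : Cn n, AnalyticAt ℝ (fun x => (fderiv ℝ ρ x w : ℂ)) p := fun w =>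
      ((Complex.ofRealCLM.comp (ContinuousLinearMap.apply ℝ ℝ w)).analyticAt _).comp h1
    unfold dz
    exact analyticAt_const.mul ((h2 _).sub (analyticAt_const.mul (h2 _)))
  obtain ⟨z, τ, H, hz, hall⟩ := exists_small_discs (E := Cn n) i0 (fun i => b i) (fun i => I • b i)
    (hρ p hpU) hR hlam hρp
    (fun i => by
      rw [fderiv_eq_re_dz, hb1]
      split_ifs
      · rw [← ofReal_ofNat, ← ofReal_div, ofReal_re]; ring
      · simp)
    (fun i => by
      rw [fderiv_I_eq, hb1]
      split_ifs
      · rw [← ofReal_ofNat, ← ofReal_div, ofReal_im]; ring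
      · simp)
    (fun i => by rw [hb1]; congr) (fun j k => by rw [hb2]; congr) (fun i => b.repr v i) hvi0
  set C := ∑ i, ‖b i‖ with hC
  have hC0 : 0 ≤ C := Finset.sum_nonneg fun i _ => norm_nonneg _
  have hexp : ∀ ε > 0, ∀ᶠ s in 𝓝[>] (0 : ℝ), ∀ ζ ∈ sphere (0 : ℂ) 1,
      ‖discOf p b (z s) ζ - p - s • ζ • v‖ ≤ ε * s := by
    intro ε hε
    have hε' : 0 < ε / (C + 1) := by positivity
    filter_upwards [nhdsWithin_le_nhds hall, nhdsWithin_le_nhds (hz.def hε'),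
      self_mem_nhdsWithin] with s h1 h2 hs ζ hζ
    have hs : 0 < s := hs
    have := discOf_sub p b h1.1 (fun i => b.repr v i) s (ζ := ζ) (by simpa using hζ)
    rw [hvb] at this
    refine this.trans ((mul_le_mul_of_nonneg_right h2 hC0).trans ?_)
    rw [Real.norm_of_nonneg hs.le, div_mul_eq_mul_div, div_mul_eq_mul_div]
    rw [div_le_iff₀ (by positivity)]
    have : 0 ≤ ε * s := by positivity
    nlinarith
  refine dbar_eq_zero_of_discs hf (fun s => discOf p b (z s)) ?_ hexp
  -- near `p` the gradient does not vanish
  have hnb : ∀ᶠ x in 𝓝 p, x ∈ U ∧ fderiv ℝ ρ x ≠ 0 :=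
    Filter.Eventually.and (hU.mem_nhds hpU)
      ((hρ p hpU).fderiv.continuousAt.eventually_ne hgrad)
  obtain ⟨r, hr, hball⟩ := Metric.eventually_nhds_iff.1 hnb
  have hvn : 0 < ‖v‖ := norm_pos_iff.2 hv0
  have hsmall : ∀ᶠ s : ℝ in 𝓝[>] 0, s < r / (2 * ‖v‖) :=
    nhdsWithin_le_nhds (eventually_lt_nhds (by positivity))
  filter_upwards [nhdsWithin_le_nhds hall, hexp (‖v‖ / 2) (by positivity), hsmall,
    self_mem_nhdsWithin] with s h1 h2 h3 hs
  have hs : 0 < s := hs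
  refine hext _ (isStationaryDisc_discOf hD hconv hU hρD b h1.2.1 h1.2.2.1 h1.2.2.2.1 (H := H s)
    (fun ζ hζ => hball ?_) (fun heq => ?_) fun ζ hζ => h1.2.2.2.2 ζ hζ _ ?_)
  · have hζ1 : ‖ζ‖ = 1 := by simpa using hζ
    rw [dist_eq_norm]
    have := norm_le_norm_sub_add (discOf p b (z s) ζ - p) (s • ζ • v)
    rw [norm_smul, norm_smul, hζ1, one_mul, Real.norm_of_nonneg hs.le] at this
    have h4 := h2 ζ hζ
    rw [lt_div_iff₀ (by positivity)] at h3
    nlinarith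
  · -- the disc is nonconstant: its values at `1` and `-1` differ by about `2 s v`
    have ha := h2 1 (by simp)
    have hb := h2 (-1) (by simp)
    rw [← heq] at hb
    have h5 := norm_sub_le_of_le hb ha
    have : discOf p b (z s) 1 - p - s • (-1 : ℂ) • v - (discOf p b (z s) 1 - p - s • (1 : ℂ) • v)
        = (2 * s) • v := by
      rw [one_smul, neg_one_smul, mul_smul, two_smul, smul_neg]; abel
    rw [this, norm_smul, Real.norm_of_nonneg (by positivity)] at h5
    nlinarith
  · rw [discOf]
    congr 1
    refine Finset.sum_congr rfl fun i _ => ?_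
    rw [hol_eq_ev _ (h1.1 i) ζ hζ, smul_eq_re_im]

end

/-! ### Flattening ∂̄f on the boundary -/

section
variable {E : Type*} [NormedAddCommGroup E] [NormedSpace ℂ E]

/-- `∂̄f_x` as a conjugate-linear form. -/
noncomputable def dbarLin (f : E → ℂ) (x : E) : E →ₗ⋆[ℂ] ℂ where
  toFun := dbar f x
  map_add' u v := by simp only [dbar, smul_add, map_add]; ring
  map_smul' c v := by
    have h1 : I • c • v = c.re • I • v - c.im • v := by
      rw [smul_comm, smul_eq_re_im c (I • v), I_smul_I_smul, smul_neg, sub_eq_add_neg]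
    have h2 : (starRingEnd ℂ) c = c.re - c.im * I := by apply Complex.ext <;> simp
    simp only [dbar, h1, smul_eq_mul, h2]
    rw [smul_eq_re_im c v]
    simp only [map_add, map_sub, map_smul, Complex.real_smul]
    linear_combination (1 / 2 : ℂ) * (c.im) * (fderiv ℝ f x (I • v) : ℂ) * I_sq

lemma dbarLin_apply (f : E → ℂ) (x v : E) : dbarLin f x v = dbar f x v := rfl

lemma fderiv_ofReal {ρ : E → ℝ} {x : E} (h : DifferentiableAt ℝ ρ x) (v : E) :
    fderiv ℝ (fun y => (ρ y : ℂ)) x v = (fderiv ℝ ρ x v : ℂ) := by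
  have := (Complex.ofRealCLM.hasFDerivAt.comp x h.hasFDerivAt).fderiv
  exact congrArg (fun f => f v) this

/-- For real `ρ`, `∂̄ρ` is the conjugate of `∂ρ`. -/
lemma dbar_ofReal {ρ : E → ℝ} {x : E} (h : DifferentiableAt ℝ ρ x) (v : E) :
    dbar (fun y => (ρ y : ℂ)) x v = (starRingEnd ℂ) (dz ρ x v) := by
  simp only [dbar, dz, fderiv_ofReal h, map_mul, map_sub, conj_ofReal, conj_I, map_div₀,
    map_one, map_ofNat]
  ring

lemma dbar_sub {f g : E → ℂ} {x : E} (hf : DifferentiableAt ℝ f x) (hg : DifferentiableAt ℝ g x)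
    (v : E) : dbar (fun y => f y - g y) x v = dbar f x v - dbar g x v := by
  simp only [dbar, fderiv_fun_sub hf hg, _root_.sub_apply]; ring

lemma dbar_mul {f g : E → ℂ} {x : E} (hf : DifferentiableAt ℝ f x) (hg : DifferentiableAt ℝ g x)
    (v : E) : dbar (fun y => f y * g y) x v = f x * dbar g x v + g x * dbar f x v := by
  simp only [dbar, fderiv_fun_mul hf hg, _root_.add_apply,
    _root_.smul_apply, smul_eq_mul]
  ring

lemma dbar_congr {f g : E → ℂ} {x : E} (h : f =ᶠ[𝓝 x] g) (v : E) : dbar f x v = dbar g x v := by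
  simp only [dbar, h.fderiv_eq]

lemma AnalyticAt.dbar {f : E → ℂ} {x : E} (h : AnalyticAt ℝ f x) (v : E) :
    AnalyticAt ℝ (fun y => dbar f y v) x := by
  have h2 : ∀ w : E, AnalyticAt ℝ (fun x => fderiv ℝ f x w) x := fun w =>
    ((ContinuousLinearMap.apply ℝ ℂ w).analyticAt _).comp h.fderiv
  unfold _root_.dbar
  exact analyticAt_const.mul ((h2 _).add (analyticAt_const.mul (h2 _)))

lemma AnalyticAt.dz {f : E → ℝ} {x : E} (h : AnalyticAt ℝ f x) (v : E) :
    AnalyticAt ℝ (fun y => dz f y v) x := by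
  have h2 : ∀ w : E, AnalyticAt ℝ (fun x => (fderiv ℝ f x w : ℂ)) x := fun w =>
    ((Complex.ofRealCLM.comp (ContinuousLinearMap.apply ℝ ℝ w)).analyticAt _).comp h.fderiv
  unfold _root_.dz
  exact analyticAt_const.mul ((h2 _).sub (analyticAt_const.mul (h2 _)))

/-- Second antiholomorphic derivatives commute. -/
lemma dbar_dbar_comm {f : E → ℂ} {x : E} (h : ContDiffAt ℝ 2 f x) (u v : E) :
    dbar (fun y => dbar f y u) x v = dbar (fun y => dbar f y v) x u := by
  have hd : DifferentiableAt ℝ (fderiv ℝ f) x :=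
    (h.fderiv_right (m := 1) (by norm_num)).differentiableAt (by norm_num)
  have hsymm : ∀ a b, fderiv ℝ (fderiv ℝ f) x a b = fderiv ℝ (fderiv ℝ f) x b a := by
    have := h.isSymmSndFDerivAt (by simp)
    exact fun a b => this a b
  have h1 : ∀ a b, fderiv ℝ (fun y => dbar f y a) x b =
      1 / 2 * (fderiv ℝ (fderiv ℝ f) x b a + I * fderiv ℝ (fderiv ℝ f) x b (I • a)) := by
    intro a b
    have h2 : ∀ w : E, HasFDerivAt (fun y => fderiv ℝ f y w)
      ((ContinuousLinearMap.apply ℝ ℂ w).comp (fderiv ℝ (fderiv ℝ f) x)) x := fun w =>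
      (ContinuousLinearMap.apply ℝ ℂ w).hasFDerivAt.comp x hd.hasFDerivAt
    have := (((h2 a).add ((h2 (I • a)).const_mul I)).const_mul (1 / 2 : ℂ)).fderiv
    have h3 := congrArg (fun l => l b) this
    exact h3
  rw [dbar, dbar, h1, h1, h1, h1, hsymm v u, hsymm (I • v) u, hsymm v (I • u),
    hsymm (I • v) (I • u)]
  ring

lemma exists_eq_mul_conj (α : E →ₗ⋆[ℂ] ℂ) (β : E →ₗ[ℂ] ℂ) (hβ : β ≠ 0)
    (h : ∀ v, β v = 0 → α v = 0) : ∃ c : ℂ, ∀ v, α v = c * (starRingEnd ℂ) (β v) := by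
  obtain ⟨w, hw⟩ : ∃ w, β w ≠ 0 := by
    by_contra hcon
    push Not at hcon
    exact hβ (LinearMap.ext hcon)
  have hw' : (starRingEnd ℂ) (β w) ≠ 0 := by simpa using hw
  refine ⟨α w / (starRingEnd ℂ) (β w), fun v => ?_⟩
  have := h (v - (β v / β w) • w) (by simp [hw])
  rw [map_sub, LinearMap.map_smulₛₗ, sub_eq_zero] at this
  rw [this, smul_eq_mul, map_div₀]
  field_simp

variable {ι : Type*} [Fintype ι]

/-- The squared length of `∂ρ_x` in the basis `b`. -/
noncomputable def sqLen (ρ : E → ℝ) (b : ι → E) (x : E) : ℂ :=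
  ∑ j, dz ρ x (b j) * dbar (fun y => (ρ y : ℂ)) x (b j)

lemma sqLen_ne_zero {ρ : E → ℝ} (b : Module.Basis ι ℂ E) {x : E} (h : DifferentiableAt ℝ ρ x)
    (hg : fderiv ℝ ρ x ≠ 0) : sqLen ρ b x ≠ 0 := by
  have h1 : sqLen ρ b x = ((∑ j, Complex.normSq (dz ρ x (b j)) : ℝ) : ℂ) := by
    rw [sqLen, ofReal_sum]
    refine Finset.sum_congr rfl fun j _ => ?_
    rw [dbar_ofReal h, mul_conj]
  rw [h1]
  intro h0
  have h0 := (Finset.sum_eq_zero_iff_of_nonneg fun j _ => normSq_nonneg _).1 (ofReal_eq_zero.1 h0)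
  refine dzLin_ne_zero hg (b.ext fun j => ?_)
  rw [dzLin_apply, LinearMap.zero_apply]
  exact normSq_eq_zero.1 (h0 j (Finset.mem_univ j))

/-- The quotient of `∂̄f` by `∂̄ρ`, for `f` whose `∂̄` is a multiple of `∂̄ρ`. -/
noncomputable def quot₁ (ρ : E → ℝ) (b : ι → E) (f : E → ℂ) (x : E) : ℂ :=
  (∑ j, dz ρ x (b j) * dbar f x (b j)) / sqLen ρ b x

/-- The quotient of the second antiholomorphic derivative of `f` by the square of `∂̄ρ`. -/
noncomputable def quot₂ (ρ : E → ℝ) (b : ι → E) (f : E → ℂ) (x : E) : ℂ :=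
  (∑ j, ∑ k, dz ρ x (b j) * dz ρ x (b k) * dbar (fun y => dbar f y (b j)) x (b k)) /
    sqLen ρ b x ^ 2

/-- Where `∂̄f` vanishes on the complex tangent space, it is `quot₁` times `∂̄ρ`. The explicit
quotient makes the factor analytic in the point. -/
lemma dbar_eq_quot₁ {ρ : E → ℝ} (b : Module.Basis ι ℂ E) {f : E → ℂ} {x : E}
    (h : DifferentiableAt ℝ ρ x) (hg : fderiv ℝ ρ x ≠ 0) (hf : ∀ v, dz ρ x v = 0 → dbar f x v = 0)
    (v : E) : dbar f x v = quot₁ ρ b f x * dbar (fun y => (ρ y : ℂ)) x v := by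
  obtain ⟨c, hc⟩ := exists_eq_mul_conj (dbarLin f x) (dzLin ρ x) (dzLin_ne_zero hg) hf
  have hc' : ∀ v, dbar f x v = c * dbar (fun y => (ρ y : ℂ)) x v := fun v => by
    rw [dbar_ofReal h]; exact hc v
  have : quot₁ ρ b f x = c := by
    rw [quot₁, div_eq_iff (sqLen_ne_zero b h hg), sqLen, Finset.mul_sum]
    refine Finset.sum_congr rfl fun j _ => ?_
    rw [hc']; ring
  rw [this, hc']

/-- If all coefficients of `∂̄f` vanish on the hypersurface, so that their differentials are
multiples of `dρ`, then these multiples are `quot₂` times the coefficients of `∂̄ρ`. This rests on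
the symmetry of second antiholomorphic derivatives. -/
lemma quot₂_eq {ρ : E → ℝ} (b : Module.Basis ι ℂ E) {f : E → ℂ} {x : E}
    (h : DifferentiableAt ℝ ρ x) (hg : fderiv ℝ ρ x ≠ 0) (hf : ContDiffAt ℝ 2 f x)
    (hm : ∀ u, ∃ l : ℂ, ∀ w, fderiv ℝ (fun y => dbar f y u) x w = l * fderiv ℝ ρ x w) (u w : E) :
    fderiv ℝ (fun y => dbar f y u) x w =
      quot₂ ρ b f x * dbar (fun y => (ρ y : ℂ)) x u * fderiv ℝ ρ x w := by
  choose l hl using hm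
  set B := dbar (fun y => (ρ y : ℂ)) x with hB
  have h1 : ∀ u w, dbar (fun y => dbar f y u) x w = l u * B w := by
    intro u w
    rw [dbar, hl, hl, hB, dbar, fderiv_ofReal h, fderiv_ofReal h]; ring
  obtain ⟨w0, hw0⟩ : ∃ w, B w ≠ 0 := by
    by_contra hcon
    push Not at hcon
    refine dzLin_ne_zero hg (LinearMap.ext fun w => ?_)
    have := hcon w
    rw [hB, dbar_ofReal h] at this
    simpa [dzLin_apply] using this
  obtain ⟨c, hc⟩ : ∃ c, ∀ u, l u = c * B u := by
    refine ⟨l w0 / B w0, fun u => ?_⟩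
    have := dbar_dbar_comm hf u w0
    rw [h1, h1] at this
    field_simp
    exact this
  have : quot₂ ρ b f x = c := by
    have hS := sqLen_ne_zero b h hg
    rw [quot₂, div_eq_iff (pow_ne_zero 2 hS), sqLen, pow_two, Finset.sum_mul_sum, Finset.mul_sum]
    refine Finset.sum_congr rfl fun j _ => ?_
    rw [Finset.mul_sum]
    refine Finset.sum_congr rfl fun k _ => ?_
    rw [h1, hc]; ring
  rw [this, hl, hc]

/-- Lagrange multipliers: the differential of a function vanishing on a level set of `ρ` is a
multiple of `dρ`. -/
lemma exists_multiplier [CompleteSpace E] {ρ : E → ℝ} {a : E → ℂ} {p : E}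
    (hρ : HasStrictFDerivAt ρ (fderiv ℝ ρ p) p) (ha : HasStrictFDerivAt a (fderiv ℝ a p) p)
    (hg : fderiv ℝ ρ p ≠ 0) (h : ∀ᶠ x in 𝓝 p, ρ x = ρ p → a x = 0) :
    ∃ l : ℂ, ∀ w, fderiv ℝ a p w = l * fderiv ℝ ρ p w := by
  have key : ∀ T : ℂ →L[ℝ] ℝ, ∃ l : ℝ, ∀ w, T (fderiv ℝ a p w) = l * fderiv ℝ ρ p w := by
    intro T
    have h1 : HasStrictFDerivAt (fun x => T (a x)) (T.comp (fderiv ℝ a p)) p :=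
      T.hasStrictFDerivAt.comp p ha
    have hp := h.self_of_nhds rfl
    have h2 : IsLocalExtrOn (fun x => T (a x)) {x | ρ x = ρ p} p := by
      left
      filter_upwards [nhdsWithin_le_nhds h, self_mem_nhdsWithin] with x hx hx'
      rw [hx hx', hp]
    obtain ⟨α, β, hne, heq⟩ := h2.exists_multipliers_of_hasStrictFDerivAt_1d hρ h1
    have hβ : β ≠ 0 := by
      rintro rfl
      have hα : α ≠ 0 := by
        rintro rfl; exact hne rfl
      simp only [zero_smul, add_zero, smul_eq_zero] at heq
      exact heq.elim hα hg
    refine ⟨-α / β, fun w => ?_⟩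
    have := congrArg (fun l => l w) heq
    simp only [_root_.add_apply, _root_.smul_apply,
      ContinuousLinearMap.comp_apply, smul_eq_mul, _root_.zero_apply] at this
    field_simp
    linarith
  obtain ⟨l1, h1⟩ := key Complex.reCLM
  obtain ⟨l2, h2⟩ := key Complex.imCLM
  refine ⟨⟨l1, l2⟩, fun w => Complex.ext ?_ ?_⟩
  · simpa using h1 w
  · simpa using h2 w

/-- A function whose `∂̄` vanishes on the complex tangent spaces of the hypersurface `Z = {ρ = 0}`
can be modified off `Z` so that its `∂̄` vanishes to second order on `Z`. -/
theorem exists_flat [CompleteSpace E] (b : Module.Basis ι ℂ E) {W Z : Set E} (hW : IsOpen W)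
    (hZW : Z ⊆ W) {ρ : E → ℝ} (hρ : AnalyticOnNhd ℝ ρ W) (hg : ∀ x ∈ W, fderiv ℝ ρ x ≠ 0)
    (hZ : ∀ x ∈ W, ρ x = 0 ↔ x ∈ Z) {f : E → ℂ} (hf : AnalyticOnNhd ℝ f W)
    (hdf : ∀ p ∈ Z, ∀ v, dz ρ p v = 0 → dbar f p v = 0) :
    ∃ f₂ : E → ℂ, AnalyticOnNhd ℝ f₂ W ∧ (∀ p ∈ Z, f₂ p = f p) ∧
      ∀ p ∈ Z, ∀ v, dbar f₂ p v = 0 ∧ fderiv ℝ (fun x => dbar f₂ x v) p = 0 := by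
  set r : E → ℂ := fun x => (ρ x : ℂ) with hr
  have hra : AnalyticOnNhd ℝ r W := fun x hx => (Complex.ofRealCLM.analyticAt _).comp (hρ x hx)
  have hρd : ∀ x ∈ W, DifferentiableAt ℝ ρ x := fun x hx => (hρ x hx).differentiableAt
  have hr0 : ∀ p ∈ Z, r p = 0 := fun p hp => by
    rw [hr]; simp [(hZ p (hZW hp)).2 hp]
  have hSa : AnalyticOnNhd ℝ (sqLen ρ b) W := fun x hx =>
    Finset.analyticAt_fun_sum _ fun j _ => ((hρ x hx).dz _).mul ((hra x hx).dbar _)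
  have hS0 : ∀ x ∈ W, sqLen ρ b x ≠ 0 := fun x hx => sqLen_ne_zero b (hρd x hx) (hg x hx)
  have hq1 : AnalyticOnNhd ℝ (quot₁ ρ b f) W := fun x hx =>
    (Finset.analyticAt_fun_sum _ fun j _ => ((hρ x hx).dz _).mul ((hf x hx).dbar _)).div
      (hSa x hx) (hS0 x hx)
  -- subtracting a multiple of `ρ` makes `∂̄f₀` vanish on `Z`; its differential is then `m ∂̄ρ ⊗ dρ`
  set f₀ : E → ℂ := fun x => f x - r x * quot₁ ρ b f x with hf₀
  have hf₀a : AnalyticOnNhd ℝ f₀ W := fun x hx => (hf x hx).sub ((hra x hx).mul (hq1 x hx))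
  have hq2 : AnalyticOnNhd ℝ (quot₂ ρ b f₀) W := fun x hx =>
    (Finset.analyticAt_fun_sum _ fun j _ => Finset.analyticAt_fun_sum _ fun k _ =>
      (((hρ x hx).dz _).mul ((hρ x hx).dz _)).mul (((hf₀a x hx).dbar _).dbar _)).div
      ((hSa x hx).pow 2) (pow_ne_zero 2 (hS0 x hx))
  set m := quot₂ ρ b f₀ with hm
  have hdf₀ : ∀ p ∈ Z, ∀ v, dbar f₀ p v = 0 := by
    intro p hp v
    have hpW := hZW hp
    rw [hf₀, dbar_sub (hf p hpW).differentiableAt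
      ((hra p hpW).differentiableAt.fun_mul (hq1 p hpW).differentiableAt),
      dbar_mul (hra p hpW).differentiableAt (hq1 p hpW).differentiableAt, hr0 p hp,
      dbar_eq_quot₁ b (hρd p hpW) (hg p hpW) (hdf p hp)]
    ring
  have hddf₀ : ∀ p ∈ Z, ∀ u w, fderiv ℝ (fun y => dbar f₀ y u) p w =
      m p * dbar r p u * fderiv ℝ ρ p w := by
    intro p hp u w
    have hpW := hZW hp
    refine quot₂_eq b (hρd p hpW) (hg p hpW) (hf₀a p hpW).contDiffAt (fun u => ?_) u w
    refine exists_multiplier (hρ p hpW).hasStrictFDerivAt ((hf₀a p hpW).dbar u).hasStrictFDerivAt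
      (hg p hpW) ?_
    filter_upwards [hW.mem_nhds hpW] with x hx hxp
    rw [(hZ p hpW).2 hp, hZ x hx] at hxp
    exact hdf₀ x hxp u
  -- `∂̄(ρ² m / 2)` has differential `m ∂̄ρ ⊗ dρ` on `Z`, which cancels the remaining term
  set q : E → ℂ := fun x => 1 / 2 * m x with hq
  have hqa : AnalyticOnNhd ℝ q W := fun x hx => analyticAt_const.mul (hq2 x hx)
  refine ⟨fun x => f₀ x - r x * (r x * q x), fun x hx => (hf₀a x hx).sub
    ((hra x hx).mul ((hra x hx).mul (hqa x hx))), fun p hp => by simp [hf₀, hr0 p hp], ?_⟩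
  have hform : ∀ x ∈ W, ∀ v, dbar (fun x => f₀ x - r x * (r x * q x)) x v =
      dbar f₀ x v - r x * (r x * dbar q x v + 2 * q x * dbar r x v) := by
    intro x hx v
    rw [dbar_sub (hf₀a x hx).differentiableAt
      ((hra x hx).differentiableAt.fun_mul
        ((hra x hx).differentiableAt.fun_mul (hqa x hx).differentiableAt)),
      dbar_mul (hra x hx).differentiableAt
        ((hra x hx).differentiableAt.fun_mul (hqa x hx).differentiableAt),
      dbar_mul (hra x hx).differentiableAt (hqa x hx).differentiableAt]
    ring
  intro p hp v
  have hpW := hZW hp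
  refine ⟨by rw [hform p hpW, hdf₀ p hp, hr0 p hp]; ring, ?_⟩
  have hev : (fun x => dbar (fun x => f₀ x - r x * (r x * q x)) x v) =ᶠ[𝓝 p]
      fun x => dbar f₀ x v - r x * (r x * dbar q x v + 2 * q x * dbar r x v) := by
    filter_upwards [hW.mem_nhds hpW] with x hx using hform x hx v
  rw [hev.fderiv_eq]
  have hA : AnalyticAt ℝ (fun x => r x * dbar q x v + 2 * q x * dbar r x v) p :=
    ((hra p hpW).mul ((hqa p hpW).dbar v)).add
      ((analyticAt_const.mul (hqa p hpW)).mul ((hra p hpW).dbar v))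
  rw [fderiv_fun_sub ((hf₀a p hpW).dbar v).differentiableAt
    ((hra p hpW).differentiableAt.fun_mul hA.differentiableAt),
    fderiv_fun_mul (hra p hpW).differentiableAt hA.differentiableAt]
  ext w
  simp only [_root_.sub_apply, _root_.add_apply,
    _root_.smul_apply, smul_eq_mul, _root_.zero_apply, hr0 p hp,
    hddf₀ p hp]
  rw [hr, fderiv_ofReal (hρd p hpW)]
  simp only [hq]
  ring

end

/-! ### Cutoff and extension by zero -/

section
variable {E : Type*} [NormedAddCommGroup E] [NormedSpace ℝ E]

/-- Extension by zero of a `C¹` function which is flat on the boundary. -/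
lemma contDiff_indicator {F : Type*} [NormedAddCommGroup F] [NormedSpace ℝ F] {D : Set E}
    (hD : IsOpen D) {h : E → F} (hh : ContDiff ℝ 1 h) (h0 : ∀ p ∈ frontier D, h p = 0)
    (h1 : ∀ p ∈ frontier D, fderiv ℝ h p = 0) :
    ContDiff ℝ 1 (D.indicator h) ∧
      ∀ x, fderiv ℝ (D.indicator h) x = D.indicator (fderiv ℝ h) x := by
  obtain ⟨hd, hc⟩ := contDiff_one_iff_fderiv.1 hh
  have key : ∀ x, HasFDerivAt (D.indicator h) (D.indicator (fderiv ℝ h) x) x := by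
    intro x
    by_cases hx : x ∈ D
    · rw [indicator_of_mem hx]
      refine (hd x).hasFDerivAt.congr_of_eventuallyEq ?_
      filter_upwards [hD.mem_nhds hx] with y hy using indicator_of_mem hy h
    rw [indicator_of_notMem hx]
    by_cases hxc : x ∈ closure D
    · have hxf : x ∈ frontier D := by rw [hD.frontier_eq]; exact ⟨hxc, hx⟩
      have := (hd x).hasFDerivAt
      rw [h1 x hxf] at this
      have h2 := this.isLittleO
      refine .of_isLittleO (Asymptotics.IsBigO.trans_isLittleO
        (.of_bound' (Filter.Eventually.of_forall fun y => ?_)) h2)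
      simp only [h0 x hxf, indicator_of_notMem hx, _root_.zero_apply, sub_zero]
      exact norm_indicator_le_norm_self h y
    · refine (hasFDerivAt_const (0 : F) x).congr_of_eventuallyEq ?_
      filter_upwards [isClosed_closure.isOpen_compl.mem_nhds hxc] with y hy
      exact indicator_of_notMem (fun h => hy (subset_closure h)) _
  have hfd : fderiv ℝ (D.indicator h) = D.indicator (fderiv ℝ h) := funext fun x => (key x).fderiv
  refine ⟨contDiff_one_iff_fderiv.2 ⟨fun x => (key x).differentiableAt, ?_⟩, fun x => by rw [hfd]⟩
  rw [hfd]
  exact continuous_indicator h1 hc.continuousOn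

/-- Multiplication by a cutoff function makes a function which is smooth near a closed set globally
smooth. -/
lemma exists_cutoff [FiniteDimensional ℝ E] {Z W : Set E} (hZ : IsClosed Z) (hW : IsOpen W)
    (hZW : Z ⊆ W) {f : E → ℂ} (hf : ∀ x ∈ W, ContDiffAt ℝ 2 f x) :
    ∃ f₁ : E → ℂ, ContDiff ℝ 2 f₁ ∧ ∀ p ∈ Z, f₁ =ᶠ[𝓝 p] f := by
  obtain ⟨χ, h0, h1, -⟩ := exists_contMDiffMap_zero_one_nhds_of_isClosed (n := 2)
    (modelWithCornersSelf ℝ E) hW.isClosed_compl hZ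
    (by rwa [← subset_compl_iff_disjoint_left, compl_compl])
  have hχ : ContDiff ℝ 2 χ := χ.contMDiff.contDiff
  refine ⟨fun x => χ x • f x, contDiff_iff_contDiffAt.2 fun x => ?_, fun p hp => ?_⟩
  · by_cases hx : x ∈ W
    · exact hχ.contDiffAt.smul (hf x hx)
    · refine (contDiffAt_const (c := (0 : ℂ))).congr_of_eventuallyEq ?_
      filter_upwards [mem_nhdsSet_iff_forall.1 h0 x hx] with y hy
      have hy : χ y = 0 := hy
      simp [hy]
  · filter_upwards [mem_nhdsSet_iff_forall.1 h1 p hp] with y hy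
    have hy : χ y = 1 := hy
    simp [hy]

end

section
variable {E : Type*} [NormedAddCommGroup E] [NormedSpace ℂ E]

lemma ContDiff.dbar {f : E → ℂ} (h : ContDiff ℝ 2 f) (v : E) :
    ContDiff ℝ 1 (fun y => dbar f y v) := by
  have h1 : ContDiff ℝ 1 (fderiv ℝ f) := h.fderiv_right (by norm_num)
  have h2 : ∀ w : E, ContDiff ℝ 1 (fun x => fderiv ℝ f x w) := fun w =>
    h1.clm_apply contDiff_const
  unfold _root_.dbar
  exact contDiff_const.mul ((h2 _).add (contDiff_const.mul (h2 _)))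

/-- A function satisfying the tangential Cauchy–Riemann equations on `frontier D` has an extension
`f₁` such that `∂̄f₁`, replaced by zero off `D`, is of class `C¹` and `∂̄`-closed. -/
theorem exists_extension [FiniteDimensional ℂ E] {D U V : Set E} (hD : IsOpen D)
    (hU : IsOpen U) (hfrU : frontier D ⊆ U) {ρ : E → ℝ} (hρ : AnalyticOnNhd ℝ ρ U)
    (hρD : D ∩ U = {z | z ∈ U ∧ ρ z < 0}) (hgrad : ∀ z ∈ frontier D, fderiv ℝ ρ z ≠ 0)
    {f : E → ℂ} (hV : IsOpen V) (hfrV : frontier D ⊆ V) (hf : AnalyticOnNhd ℝ f V)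
    (hdf : ∀ p ∈ frontier D, ∀ v, dz ρ p v = 0 → dbar f p v = 0) :
    ∃ f₁ : E → ℂ, ContDiff ℝ 2 f₁ ∧ (∀ p ∈ frontier D, f₁ p = f p) ∧
      (∀ v, ContDiff ℝ 1 (D.indicator fun x => dbar f₁ x v)) ∧
      ∀ u v x, dbar (D.indicator fun x => dbar f₁ x u) x v =
        dbar (D.indicator fun x => dbar f₁ x v) x u := by
  have : FiniteDimensional ℝ E := FiniteDimensional.complexToReal E
  have : CompleteSpace E := FiniteDimensional.complete ℂ E
  have hfd : ContinuousOn (fderiv ℝ ρ) U := fun x hx =>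
    (hρ x hx).fderiv.continuousAt.continuousWithinAt
  set W := U ∩ fderiv ℝ ρ ⁻¹' {0}ᶜ ∩ V with hWdef
  have hW : IsOpen W := (hfd.isOpen_inter_preimage hU isOpen_compl_singleton).inter hV
  have hZW : frontier D ⊆ W := fun p hp => ⟨⟨hfrU hp, hgrad p hp⟩, hfrV hp⟩
  obtain ⟨f₂, h1, h2, h3⟩ := exists_flat (Module.finBasis ℂ E) hW hZW
    (hρ.mono fun x hx => hx.1.1) (fun x hx => hx.1.2)
    (fun x hx => ⟨fun h => mem_frontier_of_rho_eq_zero hD hU hρD hx.1.1 h hx.1.2,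
      fun h => rho_eq_zero hD hU hfrU hρ.continuousOn hρD h⟩)
    (hf.mono fun x hx => hx.2) hdf
  obtain ⟨f₁, h4, h5⟩ := exists_cutoff isClosed_frontier hW hZW fun x hx => (h1 x hx).contDiffAt
  have h6 : ∀ p ∈ frontier D, ∀ v, (fun x => dbar f₁ x v) =ᶠ[𝓝 p] fun x => dbar f₂ x v := by
    intro p hp v
    filter_upwards [(h5 p hp).eventually_nhds] with x hx using dbar_congr hx v
  have h7 : ∀ v, ContDiff ℝ 1 (D.indicator fun x => dbar f₁ x v) ∧
      ∀ x, fderiv ℝ (D.indicator fun x => dbar f₁ x v) x =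
        D.indicator (fderiv ℝ fun x => dbar f₁ x v) x := fun v =>
    contDiff_indicator hD (h4.dbar v)
      (fun p hp => by rw [(h6 p hp v).eq_of_nhds]; exact (h3 p hp v).1)
      (fun p hp => by rw [(h6 p hp v).fderiv_eq]; exact (h3 p hp v).2)
  refine ⟨f₁, h4, fun p hp => (h5 p hp).eq_of_nhds.trans (h2 p hp), fun v => (h7 v).1, ?_⟩
  intro u v x
  rw [dbar, dbar, (h7 u).2, (h7 v).2]
  by_cases hx : x ∈ D
  · rw [indicator_of_mem hx, indicator_of_mem hx]
    exact dbar_dbar_comm h4.contDiffAt u v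
  · rw [indicator_of_notMem hx, indicator_of_notMem hx]
    simp

end

/-! ### The Cauchy transform in a complex direction -/

section
variable {X F : Type*} [NormedAddCommGroup X] [NormedSpace ℝ X] [NormedAddCommGroup F]
  [NormedSpace ℝ F]

/-- Differentiation under an interval integral, with an everywhere bounded continuous derivative. -/
lemma hasFDerivAt_parametric {k : X → ℝ → F} {k' : X → ℝ → X →L[ℝ] F} {a b M : ℝ} (hab : a ≤ b)
    (hk : Continuous (Function.uncurry k)) (hk' : Continuous (Function.uncurry k'))
    (hM : ∀ z t, ‖k' z t‖ ≤ M) (h : ∀ z t, HasFDerivAt (fun y => k y t) (k' z t) z) (z : X) :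
    HasFDerivAt (fun y => ∫ t in a..b, k y t) (∫ t in a..b, k' z t) z ∧
      ‖∫ t in a..b, k' z t‖ ≤ M * (b - a) := by
  have hc : ∀ z, Continuous (k z) := fun z => hk.comp (by fun_prop : Continuous fun t => (z, t))
  have hc' : ∀ z, Continuous (k' z) := fun z => hk'.comp (by fun_prop : Continuous fun t => (z, t))
  refine ⟨intervalIntegral.hasFDerivAt_integral_of_dominated_of_fderiv_le (𝕜 := ℝ)
    (bound := fun _ => M) Filter.univ_mem (Filter.Eventually.of_forall fun y =>
    (hc y).aestronglyMeasurable) ((hc z).intervalIntegrable _ _) (hc' z).aestronglyMeasurable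
    (Filter.Eventually.of_forall fun t _ x _ => hM x t) (by simp)
    (Filter.Eventually.of_forall fun t _ x _ => h x t), ?_⟩
  have := intervalIntegral.norm_integral_le_of_norm_le_const (a := a) (b := b) (f := k' z) (C := M)
    fun t _ => hM z t
  rwa [abs_of_nonneg (sub_nonneg.2 hab)] at this

end

section
variable {E : Type*} [NormedAddCommGroup E] [NormedSpace ℂ E]
variable {F : Type*} [NormedAddCommGroup F] [NormedSpace ℂ F]

/-- The Cauchy transform in the direction `e`, in polar coordinates: up to the factor `π`, the
convolution with `1 / w` along the complex line `z + ℂ e`, truncated to `|w| ≤ R`. -/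
noncomputable def cauchyT (e : E) (R : ℝ) (φ : E → F) (z : E) : F :=
  ∫ r in (0 : ℝ)..R, ∫ θ in (0 : ℝ)..2 * Real.pi, cexp (-(θ * I)) • φ (z - (r * cexp (θ * I)) • e)

lemma continuous_cauchyT (e : E) (R : ℝ) {φ : E → F} (hφ : Continuous φ) :
    Continuous (cauchyT e R φ) := by
  unfold cauchyT
  refine intervalIntegral.continuous_parametric_intervalIntegral_of_continuous'
    (f := fun z r => ∫ θ in (0 : ℝ)..2 * Real.pi,
      cexp (-(θ * I)) • φ (z - (r * cexp (θ * I)) • e)) ?_ _ _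
  refine intervalIntegral.continuous_parametric_intervalIntegral_of_continuous'
    (f := fun (p : E × ℝ) θ => cexp (-(θ * I)) • φ (p.1 - (p.2 * cexp (θ * I)) • e)) ?_ _ _
  simp only [Function.uncurry_def]
  fun_prop

lemma norm_cexp_neg (θ : ℝ) : ‖cexp (-(θ * I))‖ = 1 := by
  rw [← neg_mul, ← ofReal_neg, norm_exp_ofReal_mul_I]

/-- Differentiation under the Cauchy transform. -/
lemma hasFDerivAt_cauchyT (e : E) {R : ℝ} (hR : 0 ≤ R) {φ : E → ℂ} (hφ : ContDiff ℝ 1 φ) {M : ℝ}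
    (hM : ∀ x, ‖fderiv ℝ φ x‖ ≤ M) (z : E) :
    HasFDerivAt (cauchyT e R φ) (cauchyT e R (fderiv ℝ φ) z) z := by
  have hc := hφ.continuous
  obtain ⟨hd, hc'⟩ := contDiff_one_iff_fderiv.1 hφ
  have h1 : ∀ (r : ℝ) (z : E), HasFDerivAt
      (fun z => ∫ θ in (0 : ℝ)..2 * Real.pi, cexp (-(θ * I)) • φ (z - (r * cexp (θ * I)) • e))
      (∫ θ in (0 : ℝ)..2 * Real.pi, cexp (-(θ * I)) • fderiv ℝ φ (z - (r * cexp (θ * I)) • e)) z ∧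
      ‖∫ θ in (0 : ℝ)..2 * Real.pi, cexp (-(θ * I)) • fderiv ℝ φ (z - (r * cexp (θ * I)) • e)‖ ≤
        M * (2 * Real.pi - 0) := by
    intro r z
    refine hasFDerivAt_parametric
      (k := fun z (θ : ℝ) => cexp (-(θ * I)) • φ (z - (r * cexp (θ * I)) • e))
      (k' := fun z (θ : ℝ) => cexp (-(θ * I)) • fderiv ℝ φ (z - (r * cexp (θ * I)) • e))
      (by positivity) ?_ ?_ ?_ ?_ z
    · simp only [Function.uncurry_def]; fun_prop
    · simp only [Function.uncurry_def]; fun_prop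
    · intro z θ
      rw [norm_smul, norm_cexp_neg, one_mul]
      exact hM _
    · intro z θ
      refine HasFDerivAt.const_smul ?_ (cexp (-(θ * I)))
      have := (hd (z - (r * cexp (θ * I)) • e)).hasFDerivAt.comp z
        ((hasFDerivAt_id z).sub_const ((r * cexp (θ * I)) • e))
      exact this
  refine (hasFDerivAt_parametric (k := fun z (r : ℝ) => ∫ θ in (0 : ℝ)..2 * Real.pi,
      cexp (-(θ * I)) • φ (z - (r * cexp (θ * I)) • e))
    (k' := fun z (r : ℝ) => ∫ θ in (0 : ℝ)..2 * Real.pi,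
      cexp (-(θ * I)) • fderiv ℝ φ (z - (r * cexp (θ * I)) • e)) hR ?_ ?_
      (fun z r => (h1 r z).2) (fun z r => (h1 r z).1) z).1
  · refine intervalIntegral.continuous_parametric_intervalIntegral_of_continuous'
      (f := fun (p : E × ℝ) θ => cexp (-(θ * I)) • φ (p.1 - (p.2 * cexp (θ * I)) • e)) ?_ _ _
    simp only [Function.uncurry_def]
    fun_prop
  · refine intervalIntegral.continuous_parametric_intervalIntegral_of_continuous'
      (f := fun (p : E × ℝ) θ => cexp (-(θ * I)) • fderiv ℝ φ (p.1 - (p.2 * cexp (θ * I)) • e))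
      ?_ _ _
    simp only [Function.uncurry_def]
    fun_prop

/-- Continuous complex-linear forms commute with the Cauchy transform. -/
lemma clm_cauchyT [CompleteSpace F] (e : E) (R : ℝ) {φ : E → F} (hφ : Continuous φ)
    (T : F →L[ℂ] ℂ) (z : E) : T (cauchyT e R φ z) = cauchyT e R (fun x => T (φ x)) z := by
  unfold cauchyT
  have h2 : Continuous fun r : ℝ => ∫ θ in (0 : ℝ)..2 * Real.pi,
      cexp (-(θ * I)) • φ (z - (r * cexp (θ * I)) • e) := by
    refine intervalIntegral.continuous_parametric_intervalIntegral_of_continuous'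
      (f := fun (r : ℝ) θ => cexp (-(θ * I)) • φ (z - (r * cexp (θ * I)) • e)) ?_ _ _
    simp only [Function.uncurry_def]
    fun_prop
  rw [← ContinuousLinearMap.intervalIntegral_comp_comm T (h2.intervalIntegrable _ _)]
  refine intervalIntegral.integral_congr fun r _ => ?_
  have h3 : Continuous fun θ : ℝ => cexp (-(θ * I)) • φ (z - (r * cexp (θ * I)) • e) := by fun_prop
  have := ContinuousLinearMap.intervalIntegral_comp_comm T
    (h3.intervalIntegrable (μ := MeasureTheory.volume) 0 (2 * Real.pi))
  rw [← this]
  refine intervalIntegral.integral_congr fun θ _ => ?_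
  simp

/-- Evaluation of real-linear forms at a vector, as a complex-linear map. -/
noncomputable def evalC (v : E) : (E →L[ℝ] ℂ) →L[ℂ] ℂ :=
  LinearMap.mkContinuous
    { toFun := fun L => L v
      map_add' := fun _ _ => rfl
      map_smul' := fun _ _ => rfl } ‖v‖ fun L => (L.le_opNorm v).trans_eq (mul_comm _ _)

/-- The conjugate-linear part of a real-linear form, evaluated at `v`. -/
noncomputable def dbarForm (v : E) : (E →L[ℝ] ℂ) →L[ℂ] ℂ :=
  (1 / 2 : ℂ) • (evalC v + I • evalC (I • v))

lemma dbarForm_fderiv (f : E → ℂ) (x v : E) : dbarForm v (fderiv ℝ f x) = dbar f x v := rfl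

/-- `∂̄` in an arbitrary direction `v` commutes with the Cauchy transform in the direction `e`. -/
lemma dbar_cauchyT (e : E) {R : ℝ} (hR : 0 ≤ R) {φ : E → ℂ} (hφ : ContDiff ℝ 1 φ) {M : ℝ}
    (hM : ∀ x, ‖fderiv ℝ φ x‖ ≤ M) (z v : E) :
    dbar (cauchyT e R φ) z v = cauchyT e R (fun x => dbar φ x v) z := by
  rw [← dbarForm_fderiv, (hasFDerivAt_cauchyT e hR hφ hM z).fderiv,
    clm_cauchyT e R (contDiff_one_iff_fderiv.1 hφ).2]
  rfl

/-- The Cauchy–Pompeiu formula along the complex line `z + ℂ e`. -/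
theorem cauchyT_dbar (e : E) {R : ℝ} (hR : 0 ≤ R) {φ : E → ℂ} (hφ : ContDiff ℝ 1 φ) {M : ℝ}
    (hM : ∀ x, ‖fderiv ℝ φ x‖ ≤ M) (z : E) (hz : ∀ w : ℂ, ‖w‖ = R → φ (z - w • e) = 0) :
    cauchyT e R (fun x => dbar φ x e) z = Real.pi * φ z := by
  have hc := hφ.continuous
  obtain ⟨hd, hc'⟩ := contDiff_one_iff_fderiv.1 hφ
  set pt : ℝ → ℝ → E := fun r θ => z - (r * cexp (θ * I)) • e with hpt
  have hptc : Continuous (Function.uncurry pt) := by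
    simp only [hpt, Function.uncurry_def]; fun_prop
  set a : ℝ → ℝ → ℂ := fun r θ => -fderiv ℝ φ (pt r θ) (cexp (θ * I) • e) with ha
  set c : ℝ → ℝ → ℂ := fun r θ => -fderiv ℝ φ (pt r θ) ((r * (I * cexp (θ * I))) • e) with hcdef
  have hac : Continuous (Function.uncurry a) := by
    simp only [ha, Function.uncurry_def, hpt]; fun_prop
  have hcc : ∀ r, Continuous (c r) := by
    intro r
    simp only [hcdef, hpt]; fun_prop
  have hptr : ∀ r θ : ℝ, HasDerivAt (fun r => pt r θ) (-(cexp (θ * I) • e)) r := by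
    intro r θ
    have h1 : HasDerivAt (fun r : ℝ => (r * cexp (θ * I) : ℂ)) (1 * cexp (θ * I)) r :=
      (Complex.ofRealCLM.hasDerivAt).mul_const _
    rw [one_mul] at h1
    exact (h1.smul_const e).const_sub z
  have hptθ : ∀ r θ : ℝ, HasDerivAt (fun θ => pt r θ) (-((r * (I * cexp (θ * I))) • e)) θ := by
    intro r θ
    have h0 : HasDerivAt (fun θ : ℝ => (θ * I : ℂ)) (1 * I) θ :=
      (Complex.ofRealCLM.hasDerivAt).mul_const _
    have h1 : HasDerivAt (fun θ : ℝ => (r * cexp (θ * I) : ℂ)) (r * (cexp (θ * I) * (1 * I))) θ :=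
      h0.cexp.const_mul _
    rw [one_mul, mul_comm (cexp _)] at h1
    exact (h1.smul_const e).const_sub z
  have hψr : ∀ r θ : ℝ, HasDerivAt (fun r => φ (pt r θ)) (a r θ) r := by
    intro r θ
    have := (hd (pt r θ)).hasFDerivAt.comp_hasDerivAt r (hptr r θ)
    rwa [map_neg] at this
  have hψθ : ∀ r θ : ℝ, HasDerivAt (fun θ => φ (pt r θ)) (c r θ) θ := by
    intro r θ
    have := (hd (pt r θ)).hasFDerivAt.comp_hasDerivAt θ (hptθ r θ)
    rwa [map_neg] at this
  -- periodicity in the angle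
  have hper : ∀ r, ∫ θ in (0 : ℝ)..2 * Real.pi, c r θ = 0 := by
    intro r
    rw [intervalIntegral.integral_eq_sub_of_hasDerivAt (fun θ _ => hψθ r θ)
      ((hcc r).intervalIntegrable _ _)]
    simp [hpt]
  -- `∂/∂w̄ = (e^{iθ}/2) (∂/∂r + (i/r) ∂/∂θ)`
  have hpol : ∀ r θ : ℝ, r * (cexp (-(θ * I)) * dbar φ (pt r θ) e) =
      -(1 / 2) * (r * a r θ + I * c r θ) := by
    intro r θ
    have hconj : (starRingEnd ℂ) (cexp (θ * I)) = cexp (-(θ * I)) := by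
      rw [← exp_conj]; simp
    have h1 := fderiv_smul_eq φ (pt r θ) e (cexp (θ * I))
    have h2 := fderiv_smul_eq φ (pt r θ) e (r * (I * cexp (θ * I)))
    simp only [map_mul, hconj, conj_I, conj_ofReal] at h1 h2
    rw [ha, hcdef]
    simp only [h1, h2]
    linear_combination (-(1 / 2 : ℂ) * r * cexp (θ * I) * (1 / 2 * (fderiv ℝ φ (pt r θ) e -
      I * fderiv ℝ φ (pt r θ) (I • e))) + (1 / 2 : ℂ) * r * cexp (-(θ * I)) *
        dbar φ (pt r θ) e) * I_sq
  have hring : ∀ r : ℝ, 0 < r → ∫ θ in (0 : ℝ)..2 * Real.pi,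
      cexp (-(θ * I)) • dbar φ (z - (r * cexp (θ * I)) • e) e =
        -(1 / 2) * ∫ θ in (0 : ℝ)..2 * Real.pi, a r θ := by
    intro r hr
    have hr0 : (r : ℂ) ≠ 0 := ofReal_ne_zero.2 hr.ne'
    refine mul_left_cancel₀ hr0 ?_
    have hac' : Continuous (a r) := hac.comp (by fun_prop : Continuous fun t => (r, t))
    have hcr := hcc r
    rw [← intervalIntegral.integral_const_mul]
    refine (intervalIntegral.integral_congr fun θ _ => hpol r θ).trans ?_
    rw [intervalIntegral.integral_const_mul, intervalIntegral.integral_add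
      ((by fun_prop : Continuous fun θ => (r : ℂ) * a r θ).intervalIntegrable _ _)
      ((by fun_prop : Continuous fun θ => I * c r θ).intervalIntegrable _ _),
      intervalIntegral.integral_const_mul, intervalIntegral.integral_const_mul, hper]
    ring
  have hMc : Continuous fun r => ∫ θ in (0 : ℝ)..2 * Real.pi, a r θ :=
    intervalIntegral.continuous_parametric_intervalIntegral_of_continuous' hac _ _
  have hmean : ∀ r : ℝ, HasDerivAt (fun r => ∫ θ in (0 : ℝ)..2 * Real.pi, φ (pt r θ))
      (∫ θ in (0 : ℝ)..2 * Real.pi, a r θ) r := by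
    intro r
    have hac' : Continuous (a r) := hac.comp (by fun_prop : Continuous fun t => (r, t))
    refine (intervalIntegral.hasDerivAt_integral_of_dominated_loc_of_deriv_le
      (bound := fun _ => M * ‖e‖) Filter.univ_mem (Filter.Eventually.of_forall fun y =>
        Continuous.aestronglyMeasurable ?_) (Continuous.intervalIntegrable ?_ _ _)
      hac'.aestronglyMeasurable
      (Filter.Eventually.of_forall fun t _ x _ => ?_) (by simp)
      (Filter.Eventually.of_forall fun t _ x _ => hψr x t)).2
    · exact hc.comp (hptc.comp (by fun_prop : Continuous fun t => (y, t)))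
    · exact hc.comp (hptc.comp (by fun_prop : Continuous fun t => (r, t)))
    · rw [ha, norm_neg]
      refine (ContinuousLinearMap.le_of_opNorm_le _ (hM _) _).trans_eq ?_
      rw [norm_smul, norm_exp_ofReal_mul_I, one_mul]
  have hfin := intervalIntegral.integral_eq_sub_of_hasDerivAt (a := 0) (b := R)
    (fun r _ => hmean r) (hMc.intervalIntegrable _ _)
  unfold cauchyT
  rw [intervalIntegral.integral_congr_ae (g := fun r => -(1 / 2 : ℂ) *
    ∫ θ in (0 : ℝ)..2 * Real.pi, a r θ) (Filter.Eventually.of_forall fun r hr => hring r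
      (by rw [uIoc_of_le hR] at hr; exact hr.1)), intervalIntegral.integral_const_mul, hfin]
  have h1 : ∀ θ : ℝ, φ (pt R θ) = 0 := fun θ => hz _ (by
    rw [norm_mul, norm_exp_ofReal_mul_I, norm_real, mul_one, Real.norm_of_nonneg hR])
  have h2 : ∀ θ : ℝ, φ (pt 0 θ) = φ z := fun θ => by simp [hpt]
  simp only [h1, h2]
  simp
  ring

end

/-! ### The ∂̄-equation with compact support -/

section
variable {E : Type*} [NormedAddCommGroup E] [NormedSpace ℂ E]

/-- The Cauchy–Riemann equations. -/
lemma differentiableAt_of_dbar_eq_zero {f : E → ℂ} {x : E} (hf : DifferentiableAt ℝ f x)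
    (h : ∀ v, dbar f x v = 0) : DifferentiableAt ℂ f x := by
  have hI : ∀ v, fderiv ℝ f x (I • v) = I * fderiv ℝ f x v := by
    intro v
    have := h v
    rw [dbar] at this
    linear_combination (-2 * I) * this + (fderiv ℝ f x (I • v)) * I_sq
  rw [differentiableAt_iff_restrictScalars ℝ hf]
  refine ⟨{ toFun := fderiv ℝ f x
            map_add' := map_add _
            map_smul' := fun c v => ?_
            cont := (fderiv ℝ f x).cont }, rfl⟩
  rw [smul_eq_re_im, map_add, map_smul, map_smul, hI, RingHom.id_apply, smul_eq_mul]
  conv_rhs => rw [← re_add_im c]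
  simp only [Complex.real_smul]
  ring

/-- The truncation radius is immaterial once the disc of radius `R` contains the support. -/
lemma cauchyT_eq_of_le {e : E} (he : ‖e‖ = 1) {φ : E → ℂ} (hφ : Continuous φ) {R₀ R R' : ℝ}
    (h0 : ∀ x, R₀ ≤ ‖x‖ → φ x = 0) {z : E} (hR : ‖z‖ + R₀ ≤ R) (hRR : R ≤ R') :
    cauchyT e R φ z = cauchyT e R' φ z := by
  unfold cauchyT
  have hc : Continuous fun r : ℝ => ∫ θ in (0 : ℝ)..2 * Real.pi,
      cexp (-(θ * I)) • φ (z - (r * cexp (θ * I)) • e) := by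
    refine intervalIntegral.continuous_parametric_intervalIntegral_of_continuous'
      (f := fun (r : ℝ) θ => cexp (-(θ * I)) • φ (z - (r * cexp (θ * I)) • e)) ?_ _ _
    simp only [Function.uncurry_def]
    fun_prop
  rw [← intervalIntegral.integral_add_adjacent_intervals (hc.intervalIntegrable 0 R)
    (hc.intervalIntegrable R R'), left_eq_add]
  refine (intervalIntegral.integral_congr (g := fun _ => (0 : ℂ)) fun r hr => ?_).trans (by simp)
  rw [uIcc_of_le hRR] at hr
  refine (intervalIntegral.integral_congr (g := fun _ => (0 : ℂ)) fun θ _ => ?_).trans (by simp)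
  change cexp (-(θ * I)) • φ (z - (r * cexp (θ * I)) • e) = 0
  rw [h0, smul_zero]
  have h1 : ‖((r : ℂ) * cexp (θ * I)) • e‖ = |r| := by
    rw [norm_smul, norm_mul, norm_exp_ofReal_mul_I, norm_real, he, mul_one, mul_one,
      Real.norm_eq_abs]
  have h2 := norm_sub_norm_le (((r : ℂ) * cexp (θ * I)) • e) z
  rw [h1, norm_sub_rev] at h2
  linarith [hr.1, le_abs_self r]

lemma cauchyT_eq_zero {e : E} {φ : E → ℂ} (R : ℝ) {z : E} (h : ∀ w : ℂ, φ (z - w • e) = 0) :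
    cauchyT e R φ z = 0 := by
  simp [cauchyT, h]

/-- The one-dimensional Cauchy transform solves the `∂̄`-equation for a closed form of class `C¹`
supported in a bounded convex domain of dimension at least two, and the solution vanishes on the
boundary. -/
theorem exists_dbar_solution [FiniteDimensional ℂ E] (hdim : 2 ≤ Module.finrank ℂ E) {D : Set E}
    (hD : IsOpen D) (hconv : Convex ℝ D) (hbdd : Bornology.IsBounded D) {ω : E → E → ℂ}
    (hω : ∀ v, ContDiff ℝ 1 (ω v)) (hsupp : ∀ v, ∀ x ∉ D, ω v x = 0)
    (hclosed : ∀ u v x, dbar (ω u) x v = dbar (ω v) x u) :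
    ∃ u : E → ℂ, Differentiable ℝ u ∧ (∀ x ∈ D, ∀ v, dbar u x v = ω v x) ∧
      ∀ p ∈ frontier D, u p = 0 := by
  have : ProperSpace E := FiniteDimensional.proper ℂ E
  obtain ⟨R₀, hR₀, hDR⟩ : ∃ R₀ > 0, ∀ x ∈ D, ‖x‖ < R₀ := by
    obtain ⟨C, hC⟩ := hbdd.exists_norm_le
    exact ⟨max C 0 + 1, by positivity, fun x hx =>
      ((hC x hx).trans (le_max_left _ _)).trans_lt (lt_add_one _)⟩
  have hclR : ∀ x ∈ closure D, ‖x‖ ≤ R₀ := fun x hx => by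
    have := closure_minimal (fun y hy => (hDR y hy).le : D ⊆ {y | ‖y‖ ≤ R₀})
      (isClosed_le continuous_norm continuous_const)
    exact this hx
  have hω0 : ∀ v x, R₀ ≤ ‖x‖ → ω v x = 0 := fun v x hx =>
    hsupp v x fun h => absurd (hDR x h) (not_lt.2 hx)
  have hM : ∀ v, ∃ M, ∀ x, ‖fderiv ℝ (ω v) x‖ ≤ M := by
    intro v
    have hcs : HasCompactSupport (ω v) :=
      HasCompactSupport.intro (isCompact_closedBall (0 : E) R₀) fun x hx => hω0 v x (by
        simp only [mem_closedBall, dist_zero_right, not_le] at hx; exact hx.le)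
    exact (hcs.fderiv ℝ).exists_bound_of_continuous (contDiff_one_iff_fderiv.1 (hω v)).2
  choose M hM using hM
  have : Nontrivial E := Module.nontrivial_of_finrank_pos (R := ℂ) (by omega)
  obtain ⟨e, he⟩ : ∃ e : E, ‖e‖ = 1 := by
    obtain ⟨y, hy⟩ := exists_ne (0 : E)
    exact ⟨((‖y‖⁻¹ : ℝ) : ℂ) • y, by
      rw [norm_smul, norm_real, norm_inv, norm_norm, inv_mul_cancel₀ (norm_ne_zero_iff.2 hy)]⟩
  have hpi : (Real.pi : ℂ) ≠ 0 := ofReal_ne_zero.2 Real.pi_ne_zero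
  -- away from the truncation, the transform solves the equation
  have hsol : ∀ R z v, 0 ≤ R → ‖z‖ + R₀ ≤ R →
      dbar (cauchyT e R (ω e)) z v = Real.pi * ω v z := by
    intro R z v hR hz
    rw [dbar_cauchyT e hR (hω e) (hM e), ← cauchyT_dbar e hR (hω v) (hM v)]
    · simp only [hclosed e v]
    · intro w hw
      refine hω0 v _ ?_
      have h2 := norm_sub_norm_le (w • e) z
      rw [norm_smul, hw, he, mul_one, norm_sub_rev] at h2
      linarith
  have hdiff : ∀ R, 0 ≤ R → Differentiable ℝ (cauchyT e R (ω e)) := fun R hR z =>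
    (hasFDerivAt_cauchyT e hR (hω e) (hM e) z).differentiableAt
  set R := 2 * R₀ with hR
  have hR0 : 0 ≤ R := by positivity
  refine ⟨fun z => (Real.pi : ℂ)⁻¹ * cauchyT e R (ω e) z, (hdiff R hR0).const_mul _, ?_, ?_⟩
  · intro x hx v
    rw [dbar_mul (differentiableAt_const _) (hdiff R hR0 x), hsol R x v hR0 (by linarith [hDR x hx])]
    have : dbar (fun _ : E => (Real.pi : ℂ)⁻¹) x v = 0 := by simp [dbar]
    rw [this]
    field_simp
    ring
  · intro p hp
    have hpD : p ∉ D := by rw [hD.frontier_eq] at hp; exact hp.2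
    have hpR : ‖p‖ ≤ R₀ := hclR p (frontier_subset_closure hp)
    suffices cauchyT e R (ω e) p = 0 by simp [this]
    -- a complex supporting hyperplane at `p`
    obtain ⟨l, hl⟩ := RCLike.geometric_hahn_banach_open_point (𝕜 := ℂ) hconv hD hpD
    have hmiss : ∀ v, l v = 0 → p + v ∉ D := by
      intro v hv h
      have := hl _ h
      rw [map_add, hv, add_zero] at this
      exact lt_irrefl _ this
    by_cases hle : l e = 0
    · exact cauchyT_eq_zero R fun w => hsupp e _ (by
        rw [sub_eq_add_neg]; exact hmiss _ (by simp [hle]))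
    obtain ⟨v, hv0, hv⟩ : ∃ v : E, v ≠ 0 ∧ l v = 0 := by
      have hker : LinearMap.ker l.toLinearMap ≠ ⊥ := by
        intro hbot
        have h1 := LinearMap.finrank_le_finrank_of_injective (LinearMap.ker_eq_bot.1 hbot)
        rw [Module.finrank_self] at h1
        omega
      obtain ⟨v, hv, hv0⟩ := Submodule.exists_mem_ne_zero_of_ne_bot hker
      exact ⟨v, hv0, hv⟩
    obtain ⟨k, hk⟩ : ∃ k : E →L[ℂ] ℂ, k v ≠ 0 := by
      obtain ⟨k, -, hk⟩ := exists_dual_vector ℂ v (norm_ne_zero_iff.2 hv0)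
      exact ⟨k, by rw [hk]; simpa using hv0⟩
    set m : E →L[ℂ] ℂ := k - (k e / l e) • l with hm
    have hme : m e = 0 := by simp [hm, hle]
    have hmv : m v = k v := by simp [hm, hv]
    -- far away on the complex line `p + ℂ v`, the lines in the direction `e` do not meet `D`
    obtain ⟨C, hC0, hC⟩ : ∃ C : ℝ, 0 < C ∧ ∀ c : ℂ, ‖c‖ = C → ∀ w : ℂ, p + c • v - w • e ∉ D := by
      have hkn : 0 < ‖k v‖ := norm_pos_iff.2 hk
      refine ⟨(‖m‖ * R₀ + ‖m‖ * ‖p‖ + 1) / ‖k v‖, by positivity, fun c hc w hD' => ?_⟩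
      have h1 := m.le_opNorm (p + c • v - w • e)
      have h2 : m (p + c • v - w • e) = m p + c * k v := by simp [hme, hmv]
      have h3 := norm_sub_le (m p + c * k v) (m p)
      rw [add_sub_cancel_left, norm_mul, hc, div_mul_cancel₀ _ hkn.ne', ← h2] at h3
      have h4 := m.le_opNorm p
      have h5 := mul_le_mul_of_nonneg_left (hDR _ hD').le (norm_nonneg m)
      linarith
    set R' := max R (R₀ + C * ‖v‖ + R₀) with hR'
    have hR'0 : 0 ≤ R' := hR0.trans (le_max_left _ _)
    rw [cauchyT_eq_of_le he (hω e).continuous (hω0 e) (by linarith : ‖p‖ + R₀ ≤ R)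
      (le_max_left R (R₀ + C * ‖v‖ + R₀)), ← hR']
    -- on this line the transform is holomorphic, and it vanishes for `‖c‖ = C`
    set h : ℂ → ℂ := fun c => cauchyT e R' (ω e) (p + c • v) with hh
    have hcont : Continuous h :=
      (continuous_cauchyT e R' (hω e).continuous).comp (by fun_prop)
    have hdh : DifferentiableOn ℂ h (ball 0 C) := by
      intro c hc
      refine DifferentiableAt.differentiableWithinAt ?_
      have hin : HasFDerivAt (fun c : ℂ => p + c • v)
          ((ContinuousLinearMap.toSpanSingleton ℂ v).restrictScalars ℝ) c := by
        have := ((ContinuousLinearMap.toSpanSingleton ℂ v).restrictScalars ℝ).hasFDerivAt (x := c)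
        exact this.const_add p
      have hcomp := ((hdiff R' hR'0) (p + c • v)).hasFDerivAt.comp c hin
      refine differentiableAt_of_dbar_eq_zero hcomp.differentiableAt fun w => ?_
      have hval : ∀ w, fderiv ℝ h c w = fderiv ℝ (cauchyT e R' (ω e)) (p + c • v) (w • v) := by
        intro w
        have : fderiv ℝ h c = _ := hcomp.fderiv
        rw [this]; rfl
      have : dbar h c w = dbar (cauchyT e R' (ω e)) (p + c • v) (w • v) := by
        rw [dbar, dbar, hval, hval, smul_smul, smul_eq_mul]
      change dbar h c w = 0
      rw [this, hsol R' _ _ hR'0, hsupp _ _ (hmiss _ (by simp [hv])), mul_zero]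
      refine le_trans ?_ (le_max_right _ _)
      have h1 : ‖c‖ ≤ C := (mem_ball_zero_iff.1 hc).le
      have h2 := norm_add_le p (c • v)
      rw [norm_smul] at h2
      have h3 := mul_le_mul_of_nonneg_right h1 (norm_nonneg v)
      linarith
    have hbd := Complex.norm_le_of_forall_mem_frontier_norm_le (C := 0) isBounded_ball
      (⟨hdh, hcont.continuousOn⟩ : DiffContOnCl ℂ h (ball 0 C)) (fun c hc => by
        rw [frontier_ball _ hC0.ne'] at hc
        rw [norm_le_zero_iff]
        exact cauchyT_eq_zero R' fun w => hsupp e _ (hC c (by simpa using hc) w))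
      (subset_closure (mem_ball_self hC0))
    rw [norm_le_zero_iff, hh] at hbd
    simpa using hbd

end

end

/-- **Holomorphic extension from a convex hypersurface, all stationary discs.**
If a real-analytic function on the boundary of a bounded strictly convex real-analytic
domain extends holomorphically along every stationary disc of the domain, then it
extends holomorphically to the whole domain. -/
theorem holomorphic_extension_all_stationary_discs
    {n : ℕ} (hn : 2 ≤ n)
    (D : Set (EuclideanSpace ℂ (Fin n)))
    (hD_open : IsOpen D) (hD_conv : Convex ℝ D)
    (hD_bdd : Bornology.IsBounded D) (hD_ne : D.Nonempty)
    (U : Set (EuclideanSpace ℂ (Fin n))) (hU : IsOpen U) (hfrU : frontier D ⊆ U)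
    (ρ : EuclideanSpace ℂ (Fin n) → ℝ) (hρ : AnalyticOnNhd ℝ ρ U)
    (hρD : D ∩ U = {z | z ∈ U ∧ ρ z < 0})
    (hgrad : ∀ z ∈ frontier D, fderiv ℝ ρ z ≠ 0)
    (hhess : ∀ z ∈ frontier D, ∀ v : EuclideanSpace ℂ (Fin n), v ≠ 0 →
      0 < iteratedFDeriv ℝ 2 ρ z ![v, v])
    (f : EuclideanSpace ℂ (Fin n) → ℂ)
    (V : Set (EuclideanSpace ℂ (Fin n))) (hV : IsOpen V) (hfrV : frontier D ⊆ V)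
    (hf : AnalyticOnNhd ℝ f V)
    -- extension along every stationary disc
    (hext : ∀ A : ℂ → EuclideanSpace ℂ (Fin n), IsStationaryDisc ρ D A →
      ExtendsAlong f A) :
    ∃ F : EuclideanSpace ℂ (Fin n) → ℂ, ContinuousOn F (closure D) ∧
      DifferentiableOn ℂ F D ∧ ∀ z ∈ frontier D, F z = f z := by
  have hdf : ∀ p ∈ frontier D, ∀ v, dz ρ p v = 0 → dbar f p v = 0 := fun p hp v hv =>
    dbar_eq_zero_of_stationary hD_open hD_conv hU hfrU hρ hρD hext hp (hgrad p hp) (hhess p hp)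
      (hf p (hfrV hp)).differentiableAt hv
  obtain ⟨f₁, h1, h2, h3, h4⟩ :=
    exists_extension hD_open hU hfrU hρ hρD hgrad hV hfrV hf hdf
  obtain ⟨u, hu1, hu2, hu3⟩ := exists_dbar_solution (by simpa using hn) hD_open hD_conv hD_bdd
    (ω := fun v => D.indicator fun x => dbar f₁ x v) h3
    (fun v x hx => indicator_of_notMem hx _) h4
  have hf₁ : Differentiable ℝ f₁ := h1.differentiable (by norm_num)
  refine ⟨fun z => f₁ z - u z, (hf₁.continuous.sub hu1.continuous).continuousOn, fun z hz => ?_,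
    fun z hz => by simp only [hu3 z hz, sub_zero, h2 z hz]⟩
  refine DifferentiableAt.differentiableWithinAt ?_
  refine differentiableAt_of_dbar_eq_zero ((hf₁ z).fun_sub (hu1 z)) fun v => ?_
  rw [dbar_sub (hf₁ z) (hu1 z), hu2 z hz, indicator_of_mem hz, sub_self]
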